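/- arXiv:0907.1020 — 2 statements merged into one kernel-verified Lean document; each statement's English description precedes it below -/
import Mathlib

section
/- Under Assumptions 1.1, 1.2 and 1.3, almost surely on Λ = {sup_{n≥0} ‖θ_n‖ < ∞} (with θ̂ = lim_n θ_n): ‖∇f(θ_n)‖² = o(γ_n^{−p}) and |f(θ_n) − f(θ̂)| = o(γ_n^{−p}) as n → ∞, where p = min{1, r}. -/
open MeasureTheory Filter Asymptotics
open scoped NNReal Topology

/-!
Cut the steps into blocks of a fixed small duration `T`. By Abel summation the noise accumulated
over the `k`-th block is `O(k ^ (-r))`, so `f` drops over that block by at least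
`T / 8 * ‖∇f‖ ^ 2 - O(k ^ (-2 * r))`. Adding a multiple of `k ^ (1 - 2 * r)` to the value of `f` at
the start of the `k`-th block therefore gives a Lyapunov sequence whose drops dominate the squared
gradients; let `v` be its distance to its limit. The Łojasiewicz inequality bounds `v` by a power
`μ > 1` of the gradient up to `O(k ^ (1 - 2 * r))`, so by concavity of `x ^ (1 - 1 / μ)` the
gradients at the block starts are summable, and the iterates converge. The same inequality now makes
`v` summable; being eventually antitone it is `o(1 / k)`, and hence so are the squared gradients and
the values of `f` relative to the limit. Finally `k` is comparable to `γ_n` for `n` in the `k`-th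
block.
-/

section RealSequences

theorem one_sub_mul_sub_le_rpow_mul_sub {v w q : ℝ} (hv : 0 ≤ v) (hw : 0 ≤ w) (hq : 0 ≤ q)
    (hq1 : q ≤ 1) : (1 - q) * (v - w) ≤ v ^ q * (v ^ (1 - q) - w ^ (1 - q)) := by
  have hsplit : v ^ q * v ^ (1 - q) = v := by
    rw [← Real.rpow_add_of_nonneg hv hq (sub_nonneg.2 hq1), add_sub_cancel, Real.rpow_one]
  have hyoung : v ^ q * w ^ (1 - q) ≤ q * v + (1 - q) * w :=
    Real.geom_mean_le_arith_mean2_weighted hq (sub_nonneg.2 hq1) hv hw (add_sub_cancel q 1)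
  linarith

theorem rpow_inv_le_of_le_add_mul_rpow {v g e M μ : ℝ} (hv : 0 ≤ v) (hg : 0 ≤ g) (he : 0 ≤ e)
    (hM : 0 ≤ M) (hμ : 1 ≤ μ) (h : v ≤ e + M * g ^ μ) : v ^ μ⁻¹ ≤ e ^ μ⁻¹ + M ^ μ⁻¹ * g := by
  have hμ0 : 0 < μ := zero_lt_one.trans_le hμ
  have hgμ : 0 ≤ g ^ μ := Real.rpow_nonneg hg μ
  calc v ^ μ⁻¹ ≤ (e + M * g ^ μ) ^ μ⁻¹ := Real.rpow_le_rpow hv h (inv_nonneg.2 hμ0.le)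
    _ ≤ e ^ μ⁻¹ + (M * g ^ μ) ^ μ⁻¹ :=
      Real.rpow_add_le_add_rpow he (mul_nonneg hM hgμ) (inv_nonneg.2 hμ0.le)
        (inv_le_one_of_one_le₀ hμ)
    _ = e ^ μ⁻¹ + M ^ μ⁻¹ * g := by rw [Real.mul_rpow hM hgμ, Real.rpow_rpow_inv hg hμ0.ne']

theorem le_of_lojasiewicz_descent_step {v w g e c M μ : ℝ} (hw : 0 ≤ w) (hg : 0 ≤ g)
    (he : 0 ≤ e) (hc : 0 < c) (hM : 0 ≤ M) (hμ : 1 < μ) (hdec : c * g ^ 2 ≤ v - w)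
    (hloj : v ≤ e + M * g ^ μ) :
    g ≤ (1 + M ^ μ⁻¹) / (c * (1 - μ⁻¹)) * (v ^ (1 - μ⁻¹) - w ^ (1 - μ⁻¹)) + e ^ μ⁻¹ := by
  have hwv : w ≤ v := by nlinarith [sq_nonneg g]
  have hv : 0 ≤ v := hw.trans hwv
  have hq0 : 0 ≤ μ⁻¹ := inv_nonneg.2 (by linarith)
  have hq1 : 0 < 1 - μ⁻¹ := sub_pos.2 (inv_lt_one_of_one_lt₀ hμ)
  have hΔ : 0 ≤ v ^ (1 - μ⁻¹) - w ^ (1 - μ⁻¹) :=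
    sub_nonneg.2 (Real.rpow_le_rpow hw hwv hq1.le)
  have := Real.rpow_nonneg hM μ⁻¹
  rcases le_total g (e ^ μ⁻¹) with hge | heg
  · exact le_add_of_nonneg_of_le (by positivity) hge
  rcases hg.eq_or_lt with rfl | hg0
  · positivity
  have hmul : g * (c * (1 - μ⁻¹) * g) ≤
      g * ((1 + M ^ μ⁻¹) * (v ^ (1 - μ⁻¹) - w ^ (1 - μ⁻¹))) :=
    calc g * (c * (1 - μ⁻¹) * g) = (1 - μ⁻¹) * (c * g ^ 2) := by ring
      _ ≤ (1 - μ⁻¹) * (v - w) := by gcongr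
      _ ≤ v ^ μ⁻¹ * (v ^ (1 - μ⁻¹) - w ^ (1 - μ⁻¹)) :=
        one_sub_mul_sub_le_rpow_mul_sub hv hw hq0 (by linarith)
      _ ≤ (g + M ^ μ⁻¹ * g) * (v ^ (1 - μ⁻¹) - w ^ (1 - μ⁻¹)) := by
        gcongr
        exact (rpow_inv_le_of_le_add_mul_rpow hv hg he hM hμ.le hloj).trans (by gcongr)
      _ = g * ((1 + M ^ μ⁻¹) * (v ^ (1 - μ⁻¹) - w ^ (1 - μ⁻¹))) := by ring
  have hg_le : g ≤ (1 + M ^ μ⁻¹) / (c * (1 - μ⁻¹)) * (v ^ (1 - μ⁻¹) - w ^ (1 - μ⁻¹)) := by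
    rw [div_mul_eq_mul_div, le_div_iff₀' (mul_pos hc hq1)]
    exact le_of_mul_le_mul_left hmul hg0
  exact hg_le.trans (le_add_of_nonneg_right (Real.rpow_nonneg he _))

theorem summable_sub_succ_of_eventually_antitone {φ : ℕ → ℝ}
    (hanti : ∀ᶠ k in atTop, φ (k + 1) ≤ φ k) (hφ : ∀ᶠ k in atTop, 0 ≤ φ k) :
    Summable fun k => φ k - φ (k + 1) := by
  obtain ⟨j, hj⟩ := eventually_atTop.1 (hanti.and hφ)
  refine (summable_nat_add_iff j).1 (summable_of_sum_range_le (c := φ j) (fun k => ?_) fun n => ?_)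
  · exact sub_nonneg.2 (hj (k + j) (Nat.le_add_left j k)).1
  · have htel := Finset.sum_range_sub' (fun k => φ (k + j)) n
    simp only [add_right_comm _ 1 j, zero_add] at htel
    rw [htel]
    exact sub_le_self _ (hj (n + j) (Nat.le_add_left j n)).2

theorem summable_of_lojasiewicz_descent {v g e : ℕ → ℝ} {c M μ : ℝ} (hg : ∀ k, 0 ≤ g k)
    (he : ∀ k, 0 ≤ e k) (hc : 0 < c) (hM : 0 ≤ M) (hμ : 1 < μ) (hv : ∀ᶠ k in atTop, 0 ≤ v k)
    (hdec : ∀ᶠ k in atTop, c * g k ^ 2 ≤ v k - v (k + 1))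
    (hloj : ∀ᶠ k in atTop, v k ≤ e k + M * g k ^ μ) (hes : Summable fun k => e k ^ μ⁻¹) :
    Summable g := by
  have hv_succ : ∀ᶠ k in atTop, 0 ≤ v (k + 1) := (tendsto_add_atTop_nat 1).eventually hv
  have hφ_anti : ∀ᶠ k in atTop, v (k + 1) ^ (1 - μ⁻¹) ≤ v k ^ (1 - μ⁻¹) := by
    filter_upwards [hv_succ, hdec] with k hk hdk
    exact Real.rpow_le_rpow hk (by nlinarith [sq_nonneg (g k)])
      (sub_nonneg.2 (inv_le_one_of_one_le₀ hμ.le))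
  have hφ_sum := summable_sub_succ_of_eventually_antitone hφ_anti
    (hv.mono fun k hk => Real.rpow_nonneg hk _)
  refine Summable.of_norm_bounded_eventually_nat
    ((hφ_sum.mul_left ((1 + M ^ μ⁻¹) / (c * (1 - μ⁻¹)))).add hes) ?_
  filter_upwards [hv_succ, hdec, hloj] with k hk hdk hlk
  rw [Real.norm_of_nonneg (hg k)]
  exact le_of_lojasiewicz_descent_step hk (hg k) (he k) hc hM hμ hdk hlk

theorem exists_tendsto_of_eventually_antitone {u : ℕ → ℝ}
    (hanti : ∀ᶠ k in atTop, u (k + 1) ≤ u k) (hbdd : BddBelow (Set.range u)) :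
    ∃ b, Tendsto u atTop (𝓝 b) ∧ ∀ᶠ k in atTop, b ≤ u k := by
  obtain ⟨j, hj⟩ := eventually_atTop.1 hanti
  have hbdd' : BddBelow (u '' Set.Ici j) := hbdd.mono (Set.image_subset_range u _)
  refine ⟨_, Real.tendsto_atTop_csInf_of_antitoneOn_bddBelow_nat_Ici
    (antitoneOn_nat_Ici_of_succ_le hj) hbdd', ?_⟩
  filter_upwards [eventually_ge_atTop j] with k hk
  exact csInf_le hbdd' (Set.mem_image_of_mem u hk)

-- Olivier's theorem: `(k / 2) * v k` is at most the sum of `v` over `[k / 2, k)`.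
theorem isLittleO_inv_of_summable_of_eventually_antitone {v : ℕ → ℝ}
    (hanti : ∀ᶠ k in atTop, v (k + 1) ≤ v k) (hv : Summable v) :
    v =o[atTop] fun k => (k : ℝ)⁻¹ := by
  obtain ⟨j, hj⟩ := eventually_atTop.1 hanti
  have hanti_on : AntitoneOn v (Set.Ici j) := antitoneOn_nat_Ici_of_succ_le hj
  have hnonneg : ∀ k, j ≤ k → 0 ≤ v k := fun k hk =>
    le_of_tendsto hv.tendsto_atTop_zero <| (eventually_ge_atTop k).mono fun n hn =>
      hanti_on hk (hk.trans hn) hn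
  have hhalf : Tendsto (fun k : ℕ => k / 2) atTop atTop :=
    Nat.tendsto_div_const_atTop two_ne_zero
  have htail : Tendsto (fun k => 2 * ∑ i ∈ Finset.Ico (k / 2) k, v i) atTop (𝓝 0) := by
    have hsum := hv.hasSum.tendsto_sum_nat
    simpa [Finset.sum_Ico_eq_sub v (Nat.div_le_self _ 2)] using
      (hsum.sub (hsum.comp hhalf)).const_mul 2
  have hmul : Tendsto (fun k : ℕ => (k : ℝ) * v k) atTop (𝓝 0) := by
    refine squeeze_zero' ?_ ?_ htail
    · filter_upwards [eventually_ge_atTop j] with k hk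
      exact mul_nonneg k.cast_nonneg (hnonneg k hk)
    filter_upwards [hhalf.eventually_ge_atTop j] with k hk
    have hcard : (k : ℝ) ≤ 2 * ((k - k / 2 : ℕ) : ℝ) := by exact_mod_cast (by omega)
    have hterm : ((k - k / 2 : ℕ) : ℝ) * v k ≤ ∑ i ∈ Finset.Ico (k / 2) k, v i := by
      rw [← nsmul_eq_mul, ← Nat.card_Ico]
      refine Finset.card_nsmul_le_sum _ _ _ fun i hi => ?_
      rw [Finset.mem_Ico] at hi
      exact hanti_on (hk.trans hi.1) (hk.trans (hi.1.trans hi.2.le)) hi.2.le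
    nlinarith [hnonneg k (hk.trans (Nat.div_le_self k 2))]
  refine (isLittleO_iff_tendsto' ?_).2 (by simpa [mul_comm] using hmul)
  filter_upwards [eventually_ne_atTop 0] with k hk hk'
  simp [hk] at hk'

theorem rpow_neg_add_one_le_two_mul_sub {x s : ℝ} (hx : 1 ≤ x) (hs : 1 ≤ s) :
    x ^ (-(s + 1)) ≤ 2 * (x ^ (-s) - (x + 1) ^ (-s)) := by
  have hx0 : 0 < x := zero_lt_one.trans_le hx
  have hfactor : ∀ y : ℝ, 0 < y → y ^ (-s) = y ^ (1 - s) / y := fun y hy => by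
    rw [← Real.rpow_sub_one hy.ne']; ring_nf
  have hanti : (x + 1) ^ (1 - s) ≤ x ^ (1 - s) :=
    Real.rpow_le_rpow_of_nonpos hx0 (by linarith) (by linarith)
  have := Real.rpow_nonneg hx0.le (1 - s)
  calc x ^ (-(s + 1)) = x ^ (1 - s) * (1 / x ^ 2) := by
        rw [neg_add', Real.rpow_sub_one hx0.ne', hfactor x hx0]; field_simp
    _ ≤ x ^ (1 - s) * (2 * (1 / x - 1 / (x + 1))) := by
        gcongr
        rw [div_sub_div _ _ hx0.ne' (by positivity), mul_div_assoc', div_le_div_iff₀ (by positivity)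
          (by positivity)]
        nlinarith
    _ = 2 * (x ^ (1 - s) / x - x ^ (1 - s) / (x + 1)) := by ring
    _ ≤ 2 * (x ^ (-s) - (x + 1) ^ (-s)) := by
        rw [hfactor x hx0, hfactor (x + 1) (by positivity)]
        gcongr

theorem isLittleO_natCast_rpow_neg_inv {s : ℝ} (hs : 1 < s) :
    (fun k : ℕ => (k : ℝ) ^ (-s)) =o[atTop] fun k => (k : ℝ)⁻¹ := by
  refine isLittleO_inv_of_summable_of_eventually_antitone ?_
    (Real.summable_nat_rpow.2 (neg_lt_neg hs))
  filter_upwards [eventually_gt_atTop 0] with k hk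
  exact Real.rpow_le_rpow_of_nonpos (mod_cast hk) (by simp) (by linarith)

theorem tendsto_zero_of_sq_descent {v g : ℕ → ℝ} {c : ℝ} (hc : 0 < c)
    (hv : Tendsto v atTop (𝓝 0)) (hdec : ∀ᶠ k in atTop, c * g k ^ 2 ≤ v k - v (k + 1)) :
    Tendsto g atTop (𝓝 0) := by
  have hdiff : Tendsto (fun k => c⁻¹ * (v k - v (k + 1))) atTop (𝓝 0) := by
    simpa using (hv.sub (hv.comp (tendsto_add_atTop_nat 1))).const_mul c⁻¹
  have hsq : Tendsto (fun k => g k ^ 2) atTop (𝓝 0) := by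
    refine squeeze_zero' (Eventually.of_forall fun k => sq_nonneg _) ?_ hdiff
    filter_upwards [hdec] with k hk
    rwa [← div_eq_inv_mul, le_div_iff₀' hc]
  exact (tendsto_zero_iff_abs_tendsto_zero g).2 <| by
    simpa [Real.sqrt_sq_eq_abs, Function.comp_def] using hsq.sqrt

theorem summable_of_lojasiewicz_descent_rpow {v g : ℕ → ℝ} {A c M μ s : ℝ} (hA : 0 ≤ A)
    (hc : 0 < c) (hM : 0 ≤ M) (hμ : 1 < μ) (hs : 1 < s) (hg : ∀ k, 0 ≤ g k)
    (hv0 : Tendsto v atTop (𝓝 0)) (hv : ∀ᶠ k in atTop, 0 ≤ v k)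
    (hdec : ∀ᶠ k in atTop, c * g k ^ 2 ≤ v k - v (k + 1))
    (hloj : ∀ᶠ k in atTop, v k ≤ A * (k : ℝ) ^ (-s) + M * g k ^ μ) : Summable g := by
  -- Lowering the exponent below `s` makes the `1 / ν`-th powers of the error terms summable.
  obtain ⟨ν, hν, hν_lt⟩ := exists_between (lt_min hμ hs)
  have hνμ : ν ≤ μ := (hν_lt.trans_le (min_le_left _ _)).le
  have hνs : ν < s := hν_lt.trans_le (min_le_right _ _)
  have hν0 : 0 < ν := by linarith
  have he (k : ℕ) : 0 ≤ A * (k : ℝ) ^ (-s) := mul_nonneg hA (Real.rpow_nonneg k.cast_nonneg _)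
  refine summable_of_lojasiewicz_descent hg he hc hM hν hv hdec ?_ ?_
  · have hg_lt := (tendsto_zero_of_sq_descent hc hv0 hdec).eventually_lt_const one_pos
    filter_upwards [hloj, hg_lt] with k hk hgk
    refine hk.trans ?_
    gcongr _ + M * ?_
    exact Real.rpow_le_rpow_of_exponent_ge_of_imp (hg k) hgk.le hνμ fun _ h =>
      absurd h (hν0.trans_le hνμ).ne'
  · have hpow (k : ℕ) : (A * (k : ℝ) ^ (-s)) ^ ν⁻¹ = A ^ ν⁻¹ * (k : ℝ) ^ (-s * ν⁻¹) := by
      rw [Real.mul_rpow hA (Real.rpow_nonneg k.cast_nonneg _), ← Real.rpow_mul k.cast_nonneg]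
    simp only [hpow]
    refine (Real.summable_nat_rpow.2 ?_).mul_left _
    rwa [neg_mul, neg_lt_neg_iff, ← div_eq_mul_inv, one_lt_div hν0]

theorem isLittleO_inv_of_lojasiewicz_descent_rpow {v g : ℕ → ℝ} {A c M μ s : ℝ} (hc : 0 < c)
    (hM : 0 ≤ M) (hμ : 1 ≤ μ) (hs : 1 < s) (hg : ∀ k, 0 ≤ g k) (hg_sum : Summable g)
    (hv : ∀ᶠ k in atTop, 0 ≤ v k) (hdec : ∀ᶠ k in atTop, c * g k ^ 2 ≤ v k - v (k + 1))
    (hloj : ∀ᶠ k in atTop, v k ≤ A * (k : ℝ) ^ (-s) + M * g k ^ μ) :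
    v =o[atTop] fun k => (k : ℝ)⁻¹ := by
  have hanti : ∀ᶠ k in atTop, v (k + 1) ≤ v k := by
    filter_upwards [hdec] with k hk
    nlinarith [sq_nonneg (g k)]
  refine isLittleO_inv_of_summable_of_eventually_antitone hanti ?_
  refine Summable.of_norm_bounded_eventually_nat
    (((Real.summable_nat_rpow.2 (neg_lt_neg hs)).mul_left A).add (hg_sum.mul_left M)) ?_
  filter_upwards [hloj, hv, hg_sum.tendsto_atTop_zero.eventually_lt_const one_pos] with k hk hvk hgk
  rw [Real.norm_of_nonneg hvk]
  refine hk.trans ?_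
  gcongr _ + M * ?_
  exact Real.rpow_le_self_of_le_one (hg k) hgk.le hμ

theorem summable_and_isLittleO_of_perturbed_lojasiewicz_descent {F g : ℕ → ℝ} {A b c M μ s : ℝ}
    (hA : 0 ≤ A) (hc : 0 < c) (hM : 0 ≤ M) (hμ : 1 < μ) (hs : 1 < s) (hg : ∀ k, 0 ≤ g k)
    (hF : Tendsto (fun k : ℕ => F k + A * (k : ℝ) ^ (-s)) atTop (𝓝 b))
    (hb : ∀ᶠ k : ℕ in atTop, b ≤ F k + A * (k : ℝ) ^ (-s))
    (hdec : ∀ᶠ k : ℕ in atTop, c * g k ^ 2 ≤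
      (F k + A * (k : ℝ) ^ (-s)) - (F (k + 1) + A * ((k + 1 : ℕ) : ℝ) ^ (-s)))
    (hloj : ∀ᶠ k in atTop, |F k - b| ≤ M * g k ^ μ) :
    Summable g ∧ ((fun k => g k ^ 2) =o[atTop] fun k => (k : ℝ)⁻¹) ∧
      (fun k => F k - b) =o[atTop] fun k => (k : ℝ)⁻¹ := by
  set v : ℕ → ℝ := fun k => F k + A * (k : ℝ) ^ (-s) - b
  have hv0 : Tendsto v atTop (𝓝 0) := by simpa using hF.sub_const b
  have hv : ∀ᶠ k in atTop, 0 ≤ v k := hb.mono fun k => sub_nonneg.2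
  have hv_dec : ∀ᶠ k in atTop, c * g k ^ 2 ≤ v k - v (k + 1) := by
    filter_upwards [hdec] with k hk
    linarith
  have hv_loj : ∀ᶠ k in atTop, v k ≤ A * (k : ℝ) ^ (-s) + M * g k ^ μ := by
    filter_upwards [hloj] with k hk
    linarith [le_abs_self (F k - b)]
  have hg_sum := summable_of_lojasiewicz_descent_rpow hA hc hM hμ hs hg hv0 hv hv_dec hv_loj
  have hv_rate :=
    isLittleO_inv_of_lojasiewicz_descent_rpow hc hM hμ.le hs hg hg_sum hv hv_dec hv_loj
  refine ⟨hg_sum, IsBigO.trans_isLittleO (.of_bound c⁻¹ ?_) hv_rate, ?_⟩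
  · filter_upwards [hv, hv_dec, (tendsto_add_atTop_nat 1).eventually hv] with k hk hdk hk'
    rw [Real.norm_of_nonneg (sq_nonneg _), Real.norm_of_nonneg hk, ← div_eq_inv_mul,
      le_div_iff₀' hc]
    linarith
  · exact (hv_rate.sub ((isLittleO_natCast_rpow_neg_inv hs).const_mul_left A)).congr_left
      fun k => by ring

end RealSequences

section StepSizes

/-- The total step size of the first `n` steps, written `γ_n` in the paper. -/
def elapsedTime (α : ℕ → ℝ) (n : ℕ) : ℝ := ∑ i ∈ Finset.range n, α i

/-- Assumption 1.1 of the paper, with nonnegative rather than positive step sizes. -/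
structure IsStepSchedule (α : ℕ → ℝ) : Prop where
  nonneg : ∀ n, 0 ≤ α n
  tendsto_zero : Tendsto α atTop (𝓝 0)
  tendsto_elapsedTime : Tendsto (elapsedTime α) atTop atTop

/-- The first step at which the elapsed time reaches `k * T`; the steps from `blockStart α T k` to
`blockStart α T (k + 1)` make up the `k`-th block of duration about `T`. -/
noncomputable def blockStart (α : ℕ → ℝ) (T : ℝ) (k : ℕ) : ℕ := sInf {n | k * T ≤ elapsedTime α n}

/-- The index of the block containing step `n`. -/
noncomputable def blockIndex (α : ℕ → ℝ) (T : ℝ) (n : ℕ) : ℕ := ⌊elapsedTime α n / T⌋₊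

variable {α : ℕ → ℝ} {T : ℝ}

theorem sum_Ico_eq_elapsedTime_sub (α : ℕ → ℝ) {m n : ℕ} (h : m ≤ n) :
    ∑ i ∈ Finset.Ico m n, α i = elapsedTime α n - elapsedTime α m :=
  Finset.sum_Ico_eq_sub α h

namespace IsStepSchedule

theorem monotone_elapsedTime (hα : IsStepSchedule α) : Monotone (elapsedTime α) :=
  monotone_nat_of_le_succ fun n => by
    simpa [elapsedTime, Finset.sum_range_succ] using hα.nonneg n

theorem elapsedTime_nonneg (hα : IsStepSchedule α) (n : ℕ) : 0 ≤ elapsedTime α n :=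
  Finset.sum_nonneg fun i _ => hα.nonneg i

theorem mul_le_elapsedTime_blockStart (hα : IsStepSchedule α) (T : ℝ) (k : ℕ) :
    k * T ≤ elapsedTime α (blockStart α T k) :=
  Nat.sInf_mem (hα.tendsto_elapsedTime.eventually_ge_atTop (k * T)).exists

theorem blockStart_le_iff (hα : IsStepSchedule α) {k n : ℕ} :
    blockStart α T k ≤ n ↔ k * T ≤ elapsedTime α n :=
  ⟨fun h => (hα.mul_le_elapsedTime_blockStart T k).trans (hα.monotone_elapsedTime h),
    fun h => Nat.sInf_le h⟩

theorem gc_blockStart_blockIndex (hα : IsStepSchedule α) (hT : 0 < T) :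
    GaloisConnection (blockStart α T) (blockIndex α T) := fun k n => by
  rw [hα.blockStart_le_iff, blockIndex,
    Nat.le_floor_iff (div_nonneg (hα.elapsedTime_nonneg n) hT.le), le_div_iff₀ hT]

theorem le_blockStart_blockIndex_add_one (hα : IsStepSchedule α) (hT : 0 < T) (n : ℕ) :
    n ≤ blockStart α T (blockIndex α T n + 1) :=
  (not_le.1 fun h => ((hα.gc_blockStart_blockIndex hT _ _).1 h).not_gt (Nat.lt_succ_self _)).le

theorem tendsto_blockStart (hα : IsStepSchedule α) (hT : 0 < T) :
    Tendsto (blockStart α T) atTop atTop :=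
  tendsto_atTop_atTop_of_monotone (hα.gc_blockStart_blockIndex hT).monotone_l fun n =>
    ⟨_, hα.le_blockStart_blockIndex_add_one hT n⟩

theorem tendsto_blockIndex (hα : IsStepSchedule α) (hT : 0 < T) :
    Tendsto (blockIndex α T) atTop atTop :=
  tendsto_nat_floor_atTop.comp (hα.tendsto_elapsedTime.atTop_div_const hT)

theorem mem_Icc_blockStart_blockIndex (hα : IsStepSchedule α) (hT : 0 < T) (n : ℕ) :
    n ∈ Set.Icc (blockStart α T (blockIndex α T n)) (blockStart α T (blockIndex α T n + 1)) :=
  ⟨(hα.gc_blockStart_blockIndex hT).l_u_le n, hα.le_blockStart_blockIndex_add_one hT n⟩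

theorem eventually_elapsedTime_blockStart_le (hα : IsStepSchedule α) (hT : 0 < T) {δ : ℝ}
    (hδ : 0 < δ) : ∀ᶠ k in atTop, elapsedTime α (blockStart α T k) ≤ k * T + δ := by
  have hstep : ∀ᶠ j in atTop, elapsedTime α (j + 1) ≤ elapsedTime α j + δ := by
    filter_upwards [hα.tendsto_zero.eventually_le_const hδ] with j hj
    simpa [elapsedTime, Finset.sum_range_succ] using hj
  obtain ⟨N, hN⟩ := eventually_atTop.1 hstep
  filter_upwards [(hα.tendsto_blockStart hT).eventually_gt_atTop N] with k hk
  obtain ⟨j, hj⟩ := Nat.exists_eq_succ_of_ne_zero (Nat.ne_zero_of_lt hk)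
  have hlt : elapsedTime α j < k * T := by
    rw [← not_le, ← hα.blockStart_le_iff]
    omega
  rw [hj]
  linarith [hN j (by omega)]

theorem eventually_half_le_elapsedTime_sub (hα : IsStepSchedule α) (hT : 0 < T) :
    ∀ᶠ k in atTop,
      T / 2 ≤ elapsedTime α (blockStart α T (k + 1)) - elapsedTime α (blockStart α T k) := by
  filter_upwards [hα.eventually_elapsedTime_blockStart_le hT (half_pos hT)] with k hk
  have := hα.mul_le_elapsedTime_blockStart T (k + 1)
  push_cast at this
  linarith

theorem eventually_elapsedTime_sub_le (hα : IsStepSchedule α) (hT : 0 < T) :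
    ∀ᶠ k in atTop,
      elapsedTime α (blockStart α T (k + 1)) - elapsedTime α (blockStart α T k) ≤ 2 * T := by
  filter_upwards [(tendsto_add_atTop_nat 1).eventually
    (hα.eventually_elapsedTime_blockStart_le hT hT)] with k hk
  have := hα.mul_le_elapsedTime_blockStart T k
  push_cast at hk
  linarith

theorem isBigO_inv_blockIndex (hα : IsStepSchedule α) (hT : 0 < T) :
    (fun n => (blockIndex α T n : ℝ)⁻¹) =O[atTop] fun n => (elapsedTime α n)⁻¹ := by
  refine .of_bound (2 * T) ?_
  filter_upwards [(hα.tendsto_blockIndex hT).eventually_ge_atTop 1,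
    hα.tendsto_elapsedTime.eventually_gt_atTop 0] with n hn hγ
  have hκ : (1 : ℝ) ≤ blockIndex α T n := mod_cast hn
  have hfloor : elapsedTime α n < (blockIndex α T n + 1) * T :=
    (div_lt_iff₀ hT).1 (Nat.lt_floor_add_one _)
  rw [Real.norm_of_nonneg (by positivity), Real.norm_of_nonneg (by positivity),
    ← div_eq_mul_inv, inv_eq_one_div, div_le_div_iff₀ (by positivity) hγ]
  nlinarith

theorem isLittleO_comp_blockIndex (hα : IsStepSchedule α) (hT : 0 < T) {u : ℕ → ℝ}
    (hu : u =o[atTop] fun k => (k : ℝ)⁻¹) :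
    (fun n => u (blockIndex α T n)) =o[atTop] fun n => (elapsedTime α n)⁻¹ :=
  (hu.comp_tendsto (hα.tendsto_blockIndex hT)).trans_isBigO (hα.isBigO_inv_blockIndex hT)

end IsStepSchedule

end StepSizes

section Noise

theorem norm_sum_Ico_smul_le_of_antitoneOn {E : Type*} [SeminormedAddCommGroup E]
    [NormedSpace ℝ E] {c : ℕ → ℝ} {b : ℕ → E} {m n : ℕ} {K : ℝ} (hc : AntitoneOn c (Set.Ici m))
    (hmn : m ≤ n) (hcn : 0 ≤ c n)
    (hb : ∀ k ∈ Set.Icc m n, ‖∑ i ∈ Finset.Ico m k, b i‖ ≤ K) :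
    ‖∑ i ∈ Finset.Ico m n, c i • b i‖ ≤ c m * K := by
  have habel : ‖∑ i ∈ Finset.Ico m n, c i • b i - c n • ∑ i ∈ Finset.Ico m n, b i‖ ≤
      (c m - c n) * K := by
    clear hcn
    induction n, hmn using Nat.le_induction with
    | base => simp
    | succ n hmn ih =>
      have hdrop : 0 ≤ c n - c (n + 1) :=
        sub_nonneg.2 (hc hmn (hmn.trans n.le_succ) n.le_succ)
      have hlast := hb (n + 1) ⟨hmn.trans n.le_succ, le_rfl⟩
      have hsplit : ∑ i ∈ Finset.Ico m (n + 1), c i • b i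
            - c (n + 1) • ∑ i ∈ Finset.Ico m (n + 1), b i
          = (∑ i ∈ Finset.Ico m n, c i • b i - c n • ∑ i ∈ Finset.Ico m n, b i)
            + (c n - c (n + 1)) • ∑ i ∈ Finset.Ico m (n + 1), b i := by
        rw [Finset.sum_Ico_succ_top hmn, Finset.sum_Ico_succ_top hmn]
        module
      calc _ ≤ (c m - c n) * K + (c n - c (n + 1)) * K := by
            rw [hsplit]
            refine norm_add_le_of_le (ih fun k hk => hb k ⟨hk.1, hk.2.trans n.le_succ⟩) ?_
            rw [norm_smul, Real.norm_of_nonneg hdrop]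
            gcongr
        _ = (c m - c (n + 1)) * K := by ring
  calc ‖∑ i ∈ Finset.Ico m n, c i • b i‖
      = ‖(∑ i ∈ Finset.Ico m n, c i • b i - c n • ∑ i ∈ Finset.Ico m n, b i)
          + c n • ∑ i ∈ Finset.Ico m n, b i‖ := by rw [sub_add_cancel]
    _ ≤ (c m - c n) * K + c n * K := by
        refine norm_add_le_of_le habel ?_
        rw [norm_smul, Real.norm_of_nonneg hcn]
        gcongr
        exact hb n ⟨hmn, le_rfl⟩
    _ = c m * K := by ring

theorem le_biSup_of_bddAbove_image {ι β : Type*} [ConditionallyCompleteLattice β] {s : Set ι}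
    {φ : ι → β} (hφ : BddAbove (φ '' s)) {i : ι} (hi : i ∈ s) : φ i ≤ ⨆ j ∈ s, φ j := by
  refine le_ciSup₂ (f := fun j (_ : j ∈ s) => φ j) (hφ.mono ?_) i hi
  rw [Set.iUnion_subset_iff]
  rintro j _ ⟨hj, rfl⟩
  exact Set.mem_image_of_mem φ hj

variable {E : Type*} [NormedAddCommGroup E] [NormedSpace ℝ E] {α : ℕ → ℝ} {ξ : ℕ → E} {r : ℝ}

/-- The noise accumulated from the start of the `k`-th block to any later step of that block is
eventually at most `A * k ^ (-r)`. -/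
def HasBlockNoiseBound (α : ℕ → ℝ) (ξ : ℕ → E) (T A r : ℝ) : Prop :=
  ∀ᶠ k : ℕ in atTop, ∀ n ∈ Set.Icc (blockStart α T k) (blockStart α T (k + 1)),
    ‖∑ i ∈ Finset.Ico (blockStart α T k) n, α i • ξ i‖ ≤ A * (k : ℝ) ^ (-r)

/-- The noise accumulated over any unit of elapsed time after step `m` is `O(γ_m ^ (-r))`. -/
def HasNoiseRate (α : ℕ → ℝ) (ξ : ℕ → E) (r : ℝ) : Prop :=
  ∃ K, ∀ᶠ m in atTop, ∀ n, m ≤ n → elapsedTime α n ≤ elapsedTime α m + 1 →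
    ‖∑ i ∈ Finset.Ico m n, α i • ξ i‖ ≤ K * elapsedTime α m ^ (-r)

namespace IsStepSchedule

theorem hasNoiseRate_of_weighted_sum_le (hα : IsStepSchedule α) (hr : 0 ≤ r) {K : ℝ}
    (hK : ∀ᶠ m in atTop, ∀ n, m ≤ n → elapsedTime α n ≤ elapsedTime α m + 1 →
      ‖∑ i ∈ Finset.Ico m n, (α i * elapsedTime α i ^ r) • ξ i‖ ≤ K) :
    HasNoiseRate α ξ r := by
  refine ⟨K, ?_⟩
  filter_upwards [hK, hα.tendsto_elapsedTime.eventually_gt_atTop 0] with m hm hγm n hmn hn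
  have hpos : ∀ i ∈ Set.Ici m, 0 < elapsedTime α i := fun i hi =>
    hγm.trans_le (hα.monotone_elapsedTime hi)
  have hanti : AntitoneOn (fun i => elapsedTime α i ^ (-r)) (Set.Ici m) := fun i hi j _ hij =>
    Real.rpow_le_rpow_of_nonpos (hpos i hi) (hα.monotone_elapsedTime hij) (neg_nonpos.2 hr)
  have hterm : ∀ i ∈ Finset.Ico m n, α i • ξ i =
      elapsedTime α i ^ (-r) • (α i * elapsedTime α i ^ r) • ξ i := fun i hi => by
    have hγi := hpos i (Finset.mem_Ico.1 hi).1
    rw [smul_smul, mul_left_comm, ← Real.rpow_add hγi, neg_add_cancel, Real.rpow_zero, mul_one]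
  rw [Finset.sum_congr rfl hterm, mul_comm K]
  exact norm_sum_Ico_smul_le_of_antitoneOn hanti hmn (Real.rpow_nonneg (hpos n hmn).le _)
    fun k hk => hm k hk.1 ((hα.monotone_elapsedTime hk.2).trans hn)

theorem hasNoiseRate_of_isBoundedUnder (hα : IsStepSchedule α) (hr : 0 ≤ r) {a : ℕ → ℕ}
    (ha : ∀ n, a n = sSup {k | n ≤ k ∧ elapsedTime α k - elapsedTime α n ≤ 1})
    (hbdd : IsBoundedUnder (· ≤ ·) atTop fun n =>
      ⨆ k ∈ Set.Ico n (a n), ‖∑ i ∈ Finset.Icc n k, (α i * elapsedTime α i ^ r) • ξ i‖) :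
    HasNoiseRate α ξ r := by
  obtain ⟨K, hK⟩ := hbdd
  refine hα.hasNoiseRate_of_weighted_sum_le hr (K := max K 0) ?_
  filter_upwards [eventually_map.1 hK] with m hm n hmn hn
  rcases hmn.eq_or_lt with rfl | hlt
  · simp
  obtain ⟨k, rfl⟩ := Nat.exists_eq_succ_of_ne_zero (Nat.ne_zero_of_lt hlt)
  have hwindow : BddAbove {j | m ≤ j ∧ elapsedTime α j - elapsedTime α m ≤ 1} := by
    obtain ⟨N, hN⟩ := (hα.tendsto_elapsedTime.eventually_gt_atTop (elapsedTime α m + 1)).exists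
    refine ⟨N, fun j hj => (hα.monotone_elapsedTime.reflect_lt ?_).le⟩
    linarith [hj.2]
  have hka : k + 1 ≤ a m := ha m ▸ le_csSup hwindow ⟨hmn, by linarith⟩
  rw [Nat.succ_eq_add_one, Finset.Ico_add_one_right_eq_Icc]
  exact ((le_biSup_of_bddAbove_image ((Set.finite_Ico _ _).image _).bddAbove
    (⟨Nat.le_of_lt_succ hlt, hka⟩ : k ∈ Set.Ico m (a m))).trans hm).trans (le_max_left _ _)

theorem exists_hasBlockNoiseBound (hα : IsStepSchedule α) (hr : 0 ≤ r) (hξ : HasNoiseRate α ξ r)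
    {T : ℝ} (hT : 0 < T) (hT1 : 2 * T ≤ 1) :
    ∃ A, HasBlockNoiseBound α ξ T A r := by
  obtain ⟨K, hK⟩ := hξ
  refine ⟨max K 0 * T ^ (-r), ?_⟩
  filter_upwards [(hα.tendsto_blockStart hT).eventually hK, hα.eventually_elapsedTime_sub_le hT,
    eventually_gt_atTop 0] with k hk hdur hk0 n hn
  have hkT : 0 < k * T := by positivity
  have hγn := hα.monotone_elapsedTime hn.2
  calc _ ≤ K * elapsedTime α (blockStart α T k) ^ (-r) := hk n hn.1 (by linarith)
    _ ≤ max K 0 * (k * T) ^ (-r) := by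
        have hrpow := Real.rpow_le_rpow_of_nonpos hkT (hα.mul_le_elapsedTime_blockStart T k)
          (neg_nonpos.2 hr)
        have := Real.rpow_nonneg (hα.elapsedTime_nonneg (blockStart α T k)) (-r)
        gcongr
        exact le_max_left K 0
    _ = max K 0 * T ^ (-r) * (k : ℝ) ^ (-r) := by
        rw [Real.mul_rpow k.cast_nonneg hT.le]
        ring

end IsStepSchedule

end Noise

section PerturbedRecursion

variable {E : Type*} [NormedAddCommGroup E] [NormedSpace ℝ E] {α : ℕ → ℝ} {θ G ξ : ℕ → E}
  {m n N : ℕ} {S ε : ℝ}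

theorem sub_add_sum_smul_eq_of_perturbed_step
    (hstep : ∀ i, θ (i + 1) = θ i - α i • (G i + ξ i)) (hmn : m ≤ n) :
    θ n - θ m + (∑ i ∈ Finset.Ico m n, α i) • G m =
      -(∑ i ∈ Finset.Ico m n, α i • (G i - G m) + ∑ i ∈ Finset.Ico m n, α i • ξ i) := by
  rw [← Finset.sum_Ico_sub θ hmn, Finset.sum_smul, ← Finset.sum_add_distrib,
    ← Finset.sum_add_distrib, ← Finset.sum_neg_distrib]
  refine Finset.sum_congr rfl fun i _ => ?_
  rw [hstep]
  module

theorem norm_sub_add_sum_smul_le_of_perturbed_step {D : ℝ} (hα : ∀ i, 0 ≤ α i)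
    (hstep : ∀ i, θ (i + 1) = θ i - α i • (G i + ξ i)) (hmn : m ≤ n) (hD : 0 ≤ D)
    (hS : ∑ i ∈ Finset.Ico m n, α i ≤ S) (hξ : ‖∑ i ∈ Finset.Ico m n, α i • ξ i‖ ≤ ε)
    (hG : ∀ i ∈ Finset.Ico m n, ‖G i - G m‖ ≤ D) :
    ‖θ n - θ m + (∑ i ∈ Finset.Ico m n, α i) • G m‖ ≤ S * D + ε := by
  rw [sub_add_sum_smul_eq_of_perturbed_step hstep hmn, norm_neg]
  refine norm_add_le_of_le ?_ hξ
  calc ‖∑ i ∈ Finset.Ico m n, α i • (G i - G m)‖ ≤ ∑ i ∈ Finset.Ico m n, α i * D :=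
        norm_sum_le_of_le _ fun i hi => by
          rw [norm_smul, Real.norm_of_nonneg (hα i)]
          exact mul_le_mul_of_nonneg_left (hG i hi) (hα i)
    _ ≤ S * D := by
        rw [← Finset.sum_mul]
        gcongr

theorem norm_sub_le_of_perturbed_step {L : ℝ} (hα : ∀ i, 0 ≤ α i)
    (hstep : ∀ i, θ (i + 1) = θ i - α i • (G i + ξ i)) (hL : 0 ≤ L)
    (hG : ∀ i, m ≤ i → ‖G i - G m‖ ≤ L * ‖θ i - θ m‖) (hLS : 2 * L * S ≤ 1)
    (hS : ∑ i ∈ Finset.Ico m N, α i ≤ S)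
    (hξ : ∀ i ∈ Set.Icc m N, ‖∑ j ∈ Finset.Ico m i, α j • ξ j‖ ≤ ε) (hn : n ∈ Set.Icc m N) :
    ‖θ n - θ m‖ ≤ 2 * (S * ‖G m‖ + ε) := by
  have hS0 : 0 ≤ S := (Finset.sum_nonneg fun i _ => hα i).trans hS
  have hε : 0 ≤ ε := (norm_nonneg _).trans (hξ n hn)
  induction n using Nat.strong_induction_on with
  | _ n ih =>
    have hSn : ∑ i ∈ Finset.Ico m n, α i ≤ S :=
      (Finset.sum_le_sum_of_subset_of_nonneg (Finset.Ico_subset_Ico_right hn.2)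
        fun i _ _ => hα i).trans hS
    have hdrift : ‖θ n - θ m + (∑ i ∈ Finset.Ico m n, α i) • G m‖ ≤
        S * (L * (2 * (S * ‖G m‖ + ε))) + ε := by
      refine norm_sub_add_sum_smul_le_of_perturbed_step hα hstep hn.1 (by positivity) hSn (hξ n hn)
        fun i hi => ?_
      rw [Finset.mem_Ico] at hi
      refine (hG i hi.1).trans ?_
      gcongr
      exact ih i hi.2 ⟨hi.1, hi.2.le.trans hn.2⟩
    have hdrift_coeff : 2 * L * S * (S * ‖G m‖ + ε) ≤ S * ‖G m‖ + ε :=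
      mul_le_of_le_one_left (by positivity) hLS
    calc ‖θ n - θ m‖ = ‖θ n - θ m + (∑ i ∈ Finset.Ico m n, α i) • G m
          - (∑ i ∈ Finset.Ico m n, α i) • G m‖ := by rw [add_sub_cancel_right]
      _ ≤ S * (L * (2 * (S * ‖G m‖ + ε))) + ε + S * ‖G m‖ := by
          refine norm_sub_le_of_le hdrift ?_
          rw [norm_smul, Real.norm_of_nonneg (Finset.sum_nonneg fun i _ => hα i)]
          gcongr
      _ ≤ 2 * (S * ‖G m‖ + ε) := by linarith

end PerturbedRecursion

section GradientDescent

variable {E : Type*} [NormedAddCommGroup E] [InnerProductSpace ℝ E] [CompleteSpace E]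

theorem abs_sub_sub_inner_gradient_le {f : E → ℝ} {s : Set E} {L : ℝ≥0}
    (hf : Differentiable ℝ f) (hs : Convex ℝ s) (hL : LipschitzOnWith L (gradient f) s) {x y : E}
    (hx : x ∈ s) (hy : y ∈ s) :
    |f y - f x - inner ℝ (gradient f x) (y - x)| ≤ L * ‖y - x‖ ^ 2 := by
  have hfderiv : ∀ z ∈ segment ℝ x y, ‖fderiv ℝ f z - fderiv ℝ f x‖ ≤ L * ‖y - x‖ := fun z hz => by
    rw [← toDual_gradient, ← toDual_gradient, ← map_sub, LinearIsometryEquiv.norm_map]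
    refine (hL.norm_sub_le (hs.segment_subset hx hy hz) hx).trans ?_
    gcongr
    exact norm_sub_le_of_mem_segment hz
  have hmean := (convex_segment x y).norm_image_sub_le_of_norm_fderiv_le' (fun z _ => hf z)
    hfderiv (left_mem_segment ℝ x y) (right_mem_segment ℝ x y)
  rwa [Real.norm_eq_abs, ← inner_gradient_left, mul_assoc, ← sq] at hmean

theorem norm_gradient_sq_le {f : E → ℝ} {s : Set E} {L : ℝ≥0}
    (hL : LipschitzOnWith L (gradient f) s) {x y : E} (hx : x ∈ s) (hy : y ∈ s) :
    ‖gradient f y‖ ^ 2 ≤ 2 * ‖gradient f x‖ ^ 2 + 2 * L ^ 2 * ‖y - x‖ ^ 2 :=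
  calc ‖gradient f y‖ ^ 2 ≤ (‖gradient f x‖ + L * ‖y - x‖) ^ 2 := by
        gcongr
        exact norm_le_norm_add_norm_sub' _ _ |>.trans (by gcongr; exact hL.norm_sub_le hy hx)
    _ ≤ 2 * ‖gradient f x‖ ^ 2 + 2 * L ^ 2 * ‖y - x‖ ^ 2 := by
        linarith [add_sq_le (a := ‖gradient f x‖) (b := L * ‖y - x‖), mul_pow (L : ℝ) ‖y - x‖ 2]

theorem abs_sub_le_norm_gradient_sq_add {f : E → ℝ} {s : Set E} {L : ℝ≥0}
    (hf : Differentiable ℝ f) (hs : Convex ℝ s) (hL : LipschitzOnWith L (gradient f) s) {x y : E}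
    (hx : x ∈ s) (hy : y ∈ s) :
    |f y - f x| ≤ ‖gradient f x‖ ^ 2 + (L + 1) * ‖y - x‖ ^ 2 := by
  have hinner := abs_real_inner_le_norm (gradient f x) (y - x)
  have htaylor := abs_sub_sub_inner_gradient_le hf hs hL hx hy
  have htri := abs_add_le (f y - f x - inner ℝ (gradient f x) (y - x))
    (inner ℝ (gradient f x) (y - x))
  rw [sub_add_cancel] at htri
  nlinarith [sq_nonneg (‖gradient f x‖ - ‖y - x‖), sq_nonneg ‖y - x‖, sq_nonneg ‖gradient f x‖]

theorem bddBelow_image_of_lipschitzOnWith_gradient {f : E → ℝ} {s : Set E} {L : ℝ≥0}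
    (hf : Differentiable ℝ f) (hs : Convex ℝ s) (hL : LipschitzOnWith L (gradient f) s)
    (hbdd : Bornology.IsBounded s) : BddBelow (f '' s) := by
  rcases s.eq_empty_or_nonempty with rfl | ⟨x, hx⟩
  · simp
  obtain ⟨R, hR⟩ := hbdd.subset_closedBall x
  refine ⟨f x - (‖gradient f x‖ ^ 2 + (L + 1) * R ^ 2), ?_⟩
  rintro _ ⟨y, hy, rfl⟩
  refine sub_le_of_abs_sub_le_left ((abs_sub_le_norm_gradient_sq_add hf hs hL hx hy).trans ?_)
  gcongr
  exact mem_closedBall_iff_norm.1 (hR hy)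

theorem block_descent_le {L T ε g τ : ℝ} (hT : 0 < T) (hLT : L * T ≤ 1 / 160)
    (hτ : T / 2 ≤ τ) (hg : 0 ≤ g) (hε : 0 ≤ ε) :
    -τ * g ^ 2 + g * (2 * T * (L * (2 * (2 * T * g + ε))) + ε) + L * (2 * (2 * T * g + ε)) ^ 2 ≤
      -(T / 8) * g ^ 2 + 3 / T * ε ^ 2 := by
  -- With `ε = T * e` and `L * T` replaced by its bound, `T` factors out of both sides.
  obtain ⟨e, rfl⟩ : ∃ e, ε = T * e := ⟨ε / T, (mul_div_cancel₀ ε hT.ne').symm⟩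
  have he : 0 ≤ e := nonneg_of_mul_nonneg_right hε hT
  calc _ ≤ -(T / 2) * g ^ 2 + g * (2 * T * (L * (2 * (2 * T * g + T * e))) + T * e)
          + L * (2 * (2 * T * g + T * e)) ^ 2 := by gcongr
    _ = T * (L * T * (4 * g * (2 * g + e) + 4 * (2 * g + e) ^ 2) - g ^ 2 / 2 + g * e) := by ring
    _ ≤ T * (1 / 160 * (4 * g * (2 * g + e) + 4 * (2 * g + e) ^ 2) - g ^ 2 / 2 + g * e) := by
        gcongr
    _ ≤ T * (-(g ^ 2 / 8) + 3 * e ^ 2) := by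
        refine mul_le_mul_of_nonneg_left ?_ hT.le
        nlinarith [sq_nonneg (g - 3 * e)]
    _ = -(T / 8) * g ^ 2 + 3 / T * (T * e) ^ 2 := by field_simp

/-- The Łojasiewicz inequality of Assumption 1.3 of the paper, on the set `s` near the level `b`,
with an arbitrary exponent `μ > 1`. -/
def LojasiewiczOn (f : E → ℝ) (s : Set E) (b : ℝ) : Prop :=
  ∃ δ > (0 : ℝ), ∃ μ > (1 : ℝ), ∃ M ≥ (0 : ℝ),
    ∀ x ∈ s, |f x - b| ≤ δ → |f x - b| ≤ M * ‖gradient f x‖ ^ μ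

/-- Stochastic gradient descent along a fixed noise sequence, remaining in a convex set `s` on which
the gradient is Lipschitz: a sample path of the paper's algorithm in the event `Λ`. -/
structure IsNoisyGradientDescent (f : E → ℝ) (s : Set E) (L : ℝ≥0) (α : ℕ → ℝ) (θ ξ : ℕ → E) :
    Prop where
  differentiable : Differentiable ℝ f
  convex : Convex ℝ s
  lipschitz : LipschitzOnWith L (gradient f) s
  mem : ∀ n, θ n ∈ s
  step : ∀ n, θ (n + 1) = θ n - α n • (gradient f (θ n) + ξ n)

namespace IsNoisyGradientDescent

variable {f : E → ℝ} {s : Set E} {L : ℝ≥0} {α : ℕ → ℝ} {θ ξ : ℕ → E}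

section SingleBlock

variable {m N : ℕ} {T ε : ℝ}

theorem norm_sub_le (h : IsNoisyGradientDescent f s L α θ ξ) (hα : ∀ i, 0 ≤ α i)
    (hLT : L * T ≤ 1 / 160) (hN : ∑ i ∈ Finset.Ico m N, α i ≤ 2 * T)
    (hξ : ∀ i ∈ Set.Icc m N, ‖∑ j ∈ Finset.Ico m i, α j • ξ j‖ ≤ ε) {n : ℕ}
    (hn : n ∈ Set.Icc m N) :
    ‖θ n - θ m‖ ≤ 2 * (2 * T * ‖gradient f (θ m)‖ + ε) :=
  norm_sub_le_of_perturbed_step hα h.step L.coe_nonneg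
    (fun i _ => h.lipschitz.norm_sub_le (h.mem i) (h.mem m)) (by linarith) hN hξ hn

theorem apply_sub_le (h : IsNoisyGradientDescent f s L α θ ξ) (hα : ∀ i, 0 ≤ α i) (hT : 0 < T)
    (hLT : L * T ≤ 1 / 160) (hmN : m ≤ N) (hN : ∑ i ∈ Finset.Ico m N, α i ≤ 2 * T)
    (hN' : T / 2 ≤ ∑ i ∈ Finset.Ico m N, α i)
    (hξ : ∀ i ∈ Set.Icc m N, ‖∑ j ∈ Finset.Ico m i, α j • ξ j‖ ≤ ε) :
    f (θ N) - f (θ m) ≤ -(T / 8) * ‖gradient f (θ m)‖ ^ 2 + 3 / T * ε ^ 2 := by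
  set τ := ∑ i ∈ Finset.Ico m N, α i
  set g := ‖gradient f (θ m)‖
  have hε : 0 ≤ ε := (norm_nonneg _).trans (hξ N ⟨hmN, le_rfl⟩)
  have hdispl := fun n hn => h.norm_sub_le hα hLT hN hξ (n := n) hn
  have hdrift : ‖θ N - θ m + τ • gradient f (θ m)‖ ≤ 2 * T * (L * (2 * (2 * T * g + ε))) + ε := by
    refine norm_sub_add_sum_smul_le_of_perturbed_step hα h.step hmN (by positivity) hN
      (hξ N ⟨hmN, le_rfl⟩) fun i hi => ?_
    refine (h.lipschitz.norm_sub_le (h.mem i) (h.mem m)).trans ?_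
    gcongr
    exact hdispl i (Finset.Ico_subset_Icc_self hi |> Finset.mem_Icc.1)
  have hinner : inner ℝ (gradient f (θ m)) (θ N - θ m) ≤
      -τ * g ^ 2 + g * (2 * T * (L * (2 * (2 * T * g + ε))) + ε) :=
    calc inner ℝ (gradient f (θ m)) (θ N - θ m)
        = -τ * g ^ 2 + inner ℝ (gradient f (θ m)) (θ N - θ m + τ • gradient f (θ m)) := by
          rw [inner_add_right, real_inner_smul_right, real_inner_self_eq_norm_sq]
          ring
      _ ≤ _ := by
          gcongr
          exact (real_inner_le_norm _ _).trans (by gcongr)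
  calc f (θ N) - f (θ m)
      ≤ inner ℝ (gradient f (θ m)) (θ N - θ m) + L * ‖θ N - θ m‖ ^ 2 := by
        have := abs_le.1
          (abs_sub_sub_inner_gradient_le h.differentiable h.convex h.lipschitz (h.mem m) (h.mem N))
        linarith [this.2]
    _ ≤ -τ * g ^ 2 + g * (2 * T * (L * (2 * (2 * T * g + ε))) + ε)
          + L * (2 * (2 * T * g + ε)) ^ 2 := by
        gcongr
        exact hdispl N ⟨hmN, le_rfl⟩
    _ ≤ -(T / 8) * g ^ 2 + 3 / T * ε ^ 2 :=
        block_descent_le hT hLT hN' (norm_nonneg _) hε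

end SingleBlock

section Blocks

variable {T A r : ℝ}

theorem eventually_norm_sub_blockStart_le (h : IsNoisyGradientDescent f s L α θ ξ)
    (hα : IsStepSchedule α) (hT : 0 < T) (hLT : L * T ≤ 1 / 160)
    (hξ : HasBlockNoiseBound α ξ T A r) :
    ∀ᶠ k : ℕ in atTop, ∀ n ∈ Set.Icc (blockStart α T k) (blockStart α T (k + 1)),
      ‖θ n - θ (blockStart α T k)‖ ≤
        2 * (2 * T * ‖gradient f (θ (blockStart α T k))‖ + A * (k : ℝ) ^ (-r)) := by
  filter_upwards [hξ, hα.eventually_elapsedTime_sub_le hT] with k hk hdur n hn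
  refine h.norm_sub_le hα.nonneg hLT ?_ hk hn
  rwa [sum_Ico_eq_elapsedTime_sub α (hn.1.trans hn.2)]

theorem eventually_blockStart_descent (h : IsNoisyGradientDescent f s L α θ ξ)
    (hα : IsStepSchedule α) (hT : 0 < T) (hLT : L * T ≤ 1 / 160) (hr : 1 ≤ r)
    (hξ : HasBlockNoiseBound α ξ T A r) :
    ∀ᶠ k : ℕ in atTop, T / 8 * ‖gradient f (θ (blockStart α T k))‖ ^ 2 ≤
      (f (θ (blockStart α T k)) + 6 / T * A ^ 2 * (k : ℝ) ^ (-(2 * r - 1))) -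
      (f (θ (blockStart α T (k + 1))) + 6 / T * A ^ 2 * ((k + 1 : ℕ) : ℝ) ^ (-(2 * r - 1))) := by
  filter_upwards [hξ, hα.eventually_elapsedTime_sub_le hT,
    hα.eventually_half_le_elapsedTime_sub hT, eventually_ge_atTop 1] with k hk hle hge hk1
  have hmono := (hα.gc_blockStart_blockIndex hT).monotone_l k.le_succ
  rw [← sum_Ico_eq_elapsedTime_sub α hmono] at hle hge
  have hdescent := h.apply_sub_le hα.nonneg hT hLT hmono hle hge hk
  have hnoise : 3 / T * (A * (k : ℝ) ^ (-r)) ^ 2 ≤ 6 / T * A ^ 2 *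
      ((k : ℝ) ^ (-(2 * r - 1)) - ((k + 1 : ℕ) : ℝ) ^ (-(2 * r - 1))) :=
    calc 3 / T * (A * (k : ℝ) ^ (-r)) ^ 2
        = 3 / T * A ^ 2 * (k : ℝ) ^ (-(2 * r - 1 + 1)) := by
          rw [mul_pow, ← Real.rpow_mul_natCast k.cast_nonneg]
          push_cast
          ring_nf
      _ ≤ 3 / T * A ^ 2 *
          (2 * ((k : ℝ) ^ (-(2 * r - 1)) - ((k + 1 : ℕ) : ℝ) ^ (-(2 * r - 1)))) := by
          push_cast
          gcongr
          exact rpow_neg_add_one_le_two_mul_sub (mod_cast hk1) (by linarith)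
      _ = _ := by ring
  linarith

theorem exists_blockStart_rates (h : IsNoisyGradientDescent f s L α θ ξ) (hα : IsStepSchedule α)
    (hT : 0 < T) (hLT : L * T ≤ 1 / 160) (hr : 1 < r) (hξ : HasBlockNoiseBound α ξ T A r)
    (hbdd : BddBelow (f '' s)) (hloj : ∀ b ∈ closure (f '' s), LojasiewiczOn f s b) :
    ∃ b, Summable (fun k => ‖gradient f (θ (blockStart α T k))‖) ∧
      ((fun k => ‖gradient f (θ (blockStart α T k))‖ ^ 2) =o[atTop] fun k => (k : ℝ)⁻¹) ∧
      (fun k => f (θ (blockStart α T k)) - b) =o[atTop] fun k => (k : ℝ)⁻¹ := by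
  set F : ℕ → ℝ := fun k => f (θ (blockStart α T k))
  set η : ℕ → ℝ := fun k => 6 / T * A ^ 2 * (k : ℝ) ^ (-(2 * r - 1))
  have hη : Tendsto η atTop (𝓝 0) := by
    have hs : 0 < 2 * r - 1 := by linarith
    have hpow := (tendsto_rpow_neg_atTop hs).comp (tendsto_natCast_atTop_atTop (R := ℝ))
    exact mul_zero (6 / T * A ^ 2) ▸ hpow.const_mul (6 / T * A ^ 2)
  have hη0 (k : ℕ) : 0 ≤ η k := by positivity
  have hF_mem (k : ℕ) : F k ∈ f '' s := Set.mem_image_of_mem f (h.mem _)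
  have hdec := h.eventually_blockStart_descent hα hT hLT hr.le hξ
  obtain ⟨b, hb, hb_le⟩ : ∃ b, Tendsto (fun k => F k + η k) atTop (𝓝 b) ∧
      ∀ᶠ k in atTop, b ≤ F k + η k := by
    refine exists_tendsto_of_eventually_antitone ?_ ?_
    · filter_upwards [hdec] with k hk
      exact sub_nonneg.1 (le_trans (by positivity) hk)
    · obtain ⟨B, hB⟩ := hbdd
      exact ⟨B, Set.forall_mem_range.2 fun k => le_add_of_le_of_nonneg (hB (hF_mem k)) (hη0 k)⟩
  have hF : Tendsto F atTop (𝓝 b) := by simpa using hb.sub hη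
  obtain ⟨δ, hδ, μ, hμ, M, hM, hloj_b⟩ :=
    hloj b (mem_closure_of_tendsto hF (.of_forall hF_mem))
  have hlojF : ∀ᶠ k in atTop, |F k - b| ≤ M * ‖gradient f (θ (blockStart α T k))‖ ^ μ := by
    filter_upwards [hF.eventually (Metric.closedBall_mem_nhds b hδ)] with k hk
    exact hloj_b _ (h.mem _) hk
  exact ⟨b, summable_and_isLittleO_of_perturbed_lojasiewicz_descent (by positivity) (by positivity)
    hM hμ (by linarith) (fun _ => norm_nonneg _) hb hb_le hdec hlojF⟩

theorem exists_tendsto_of_summable_gradient_blockStart (h : IsNoisyGradientDescent f s L α θ ξ)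
    (hα : IsStepSchedule α) (hT : 0 < T) (hLT : L * T ≤ 1 / 160) (hr : 1 < r)
    (hξ : HasBlockNoiseBound α ξ T A r)
    (hg : Summable fun k => ‖gradient f (θ (blockStart α T k))‖) :
    ∃ θhat, Tendsto θ atTop (𝓝 θhat) := by
  have hsum : Summable fun k : ℕ =>
      2 * (2 * T * ‖gradient f (θ (blockStart α T k))‖ + A * (k : ℝ) ^ (-r)) :=
    ((hg.mul_left _).add ((Real.summable_nat_rpow.2 (neg_lt_neg hr)).mul_left A)).mul_left 2
  have hdispl := h.eventually_norm_sub_blockStart_le hα hT hLT hξ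
  obtain ⟨θhat, hθhat⟩ : ∃ θhat, Tendsto (fun k => θ (blockStart α T k)) atTop (𝓝 θhat) := by
    refine cauchySeq_tendsto_of_complete
      (cauchySeq_of_summable_dist (Summable.of_norm_bounded_eventually_nat hsum ?_))
    filter_upwards [hdispl] with k hk
    rw [Real.norm_of_nonneg dist_nonneg, dist_comm, dist_eq_norm]
    exact hk _ ⟨(hα.gc_blockStart_blockIndex hT).monotone_l k.le_succ, le_rfl⟩
  have hgap : Tendsto (fun n => θ n - θ (blockStart α T (blockIndex α T n))) atTop (𝓝 0) := by
    refine squeeze_zero_norm' ?_ (hsum.tendsto_atTop_zero.comp (hα.tendsto_blockIndex hT))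
    filter_upwards [(hα.tendsto_blockIndex hT).eventually hdispl] with n hn
    exact hn n (hα.mem_Icc_blockStart_blockIndex hT n)
  exact ⟨θhat, by simpa using hgap.add (hθhat.comp (hα.tendsto_blockIndex hT))⟩

theorem isLittleO_norm_sub_blockStart_sq (h : IsNoisyGradientDescent f s L α θ ξ)
    (hα : IsStepSchedule α) (hT : 0 < T) (hLT : L * T ≤ 1 / 160) (hr : 1 < r)
    (hξ : HasBlockNoiseBound α ξ T A r)
    (hg : (fun k => ‖gradient f (θ (blockStart α T k))‖ ^ 2) =o[atTop] fun k => (k : ℝ)⁻¹) :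
    (fun n => ‖θ n - θ (blockStart α T (blockIndex α T n))‖ ^ 2) =o[atTop]
      fun n => (elapsedTime α n)⁻¹ := by
  have hbound : (fun k : ℕ => 32 * T ^ 2 * ‖gradient f (θ (blockStart α T k))‖ ^ 2 +
      8 * A ^ 2 * (k : ℝ) ^ (-(2 * r))) =o[atTop] fun k => (k : ℝ)⁻¹ :=
    (hg.const_mul_left _).add
      ((isLittleO_natCast_rpow_neg_inv (by linarith)).const_mul_left _)
  refine IsBigO.trans_isLittleO (.of_bound' ?_) (hα.isLittleO_comp_blockIndex hT hbound)
  filter_upwards [(hα.tendsto_blockIndex hT).eventually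
    (h.eventually_norm_sub_blockStart_le hα hT hLT hξ)] with n hn
  rw [Real.norm_of_nonneg (sq_nonneg _)]
  refine le_trans ?_ (Real.le_norm_self _)
  set κ := blockIndex α T n
  set g := ‖gradient f (θ (blockStart α T κ))‖
  calc ‖θ n - θ (blockStart α T κ)‖ ^ 2 ≤ (2 * (2 * T * g + A * (κ : ℝ) ^ (-r))) ^ 2 := by
        gcongr
        exact hn n (hα.mem_Icc_blockStart_blockIndex hT n)
    _ = 4 * (2 * T * g + A * (κ : ℝ) ^ (-r)) ^ 2 := by ring
    _ ≤ 4 * (2 * ((2 * T * g) ^ 2 + (A * (κ : ℝ) ^ (-r)) ^ 2)) := by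
        gcongr
        exact add_sq_le
    _ = 32 * T ^ 2 * g ^ 2 + 8 * A ^ 2 * (κ : ℝ) ^ (-(2 * r)) := by
        rw [mul_pow A, ← Real.rpow_mul_natCast κ.cast_nonneg]
        push_cast
        ring_nf

theorem isLittleO_norm_gradient_sq (h : IsNoisyGradientDescent f s L α θ ξ)
    (hα : IsStepSchedule α) (hT : 0 < T) (hLT : L * T ≤ 1 / 160) (hr : 1 < r)
    (hξ : HasBlockNoiseBound α ξ T A r)
    (hg : (fun k => ‖gradient f (θ (blockStart α T k))‖ ^ 2) =o[atTop] fun k => (k : ℝ)⁻¹) :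
    (fun n => ‖gradient f (θ n)‖ ^ 2) =o[atTop] fun n => (elapsedTime α n)⁻¹ := by
  refine IsBigO.trans_isLittleO (.of_norm_le fun n => ?_)
    (((hα.isLittleO_comp_blockIndex hT hg).const_mul_left 2).add
      ((h.isLittleO_norm_sub_blockStart_sq hα hT hLT hr hξ hg).const_mul_left (2 * (L : ℝ) ^ 2)))
  rw [Real.norm_of_nonneg (sq_nonneg _)]
  exact norm_gradient_sq_le h.lipschitz (h.mem _) (h.mem n)

theorem isLittleO_abs_apply_sub (h : IsNoisyGradientDescent f s L α θ ξ)
    (hα : IsStepSchedule α) (hT : 0 < T) (hLT : L * T ≤ 1 / 160) (hr : 1 < r)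
    (hξ : HasBlockNoiseBound α ξ T A r)
    (hg : (fun k => ‖gradient f (θ (blockStart α T k))‖ ^ 2) =o[atTop] fun k => (k : ℝ)⁻¹) {b : ℝ}
    (hb : (fun k => f (θ (blockStart α T k)) - b) =o[atTop] fun k => (k : ℝ)⁻¹) :
    (fun n => |f (θ n) - b|) =o[atTop] fun n => (elapsedTime α n)⁻¹ := by
  refine IsBigO.trans_isLittleO (.of_norm_le fun n => ?_)
    (((hα.isLittleO_comp_blockIndex hT hg).add
      ((h.isLittleO_norm_sub_blockStart_sq hα hT hLT hr hξ hg).const_mul_left (L + 1 : ℝ))).add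
      (hα.isLittleO_comp_blockIndex hT hb).abs_left)
  rw [Real.norm_of_nonneg (abs_nonneg _)]
  refine (abs_sub_le _ (f (θ (blockStart α T (blockIndex α T n)))) _).trans ?_
  gcongr
  exact abs_sub_le_norm_gradient_sq_add h.differentiable h.convex h.lipschitz (h.mem _) (h.mem n)

theorem exists_tendsto_and_isLittleO_inv (h : IsNoisyGradientDescent f s L α θ ξ)
    (hα : IsStepSchedule α) (hr : 1 < r) (hξ : HasNoiseRate α ξ r) (hbdd : BddBelow (f '' s))
    (hloj : ∀ b ∈ closure (f '' s), LojasiewiczOn f s b) :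
    ∃ θhat, Tendsto θ atTop (𝓝 θhat) ∧
      ((fun n => ‖gradient f (θ n)‖ ^ 2) =o[atTop] fun n => (elapsedTime α n)⁻¹) ∧
      (fun n => |f (θ n) - f θhat|) =o[atTop] fun n => (elapsedTime α n)⁻¹ := by
  set T : ℝ := 1 / (160 * (L + 1)) with hT_def
  have hT : 0 < T := by positivity
  have hL_mul_T : (L + 1) * T = 1 / 160 := by rw [hT_def]; field_simp
  have hLT : L * T ≤ 1 / 160 := by linarith
  have hT1 : 2 * T ≤ 1 := by nlinarith [L.coe_nonneg]
  obtain ⟨A, hA⟩ := hα.exists_hasBlockNoiseBound (zero_le_one.trans hr.le) hξ hT hT1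
  obtain ⟨b, hg_sum, hg, hF⟩ := h.exists_blockStart_rates hα hT hLT hr hA hbdd hloj
  obtain ⟨θhat, hθhat⟩ :=
    h.exists_tendsto_of_summable_gradient_blockStart hα hT hLT hr hA hg_sum
  have hF_tendsto : Tendsto (fun k => f (θ (blockStart α T k))) atTop (𝓝 b) :=
    tendsto_sub_nhds_zero_iff.1 (hF.trans_tendsto tendsto_inv_atTop_nhds_zero_nat)
  obtain rfl : f θhat = b := tendsto_nhds_unique
    ((h.differentiable.continuous.tendsto θhat).comp (hθhat.comp (hα.tendsto_blockStart hT)))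
    hF_tendsto
  exact ⟨θhat, hθhat, h.isLittleO_norm_gradient_sq hα hT hLT hr hA hg,
    h.isLittleO_abs_apply_sub hα hT hLT hr hA hg hF⟩

end Blocks

end IsNoisyGradientDescent

theorem stochastic_gradient_rate_min_one_r_general {Ω : Type*} [MeasurableSpace Ω] (P : Measure Ω)
    {f : E → ℝ} (hfd : Differentiable ℝ f)
    (hlip : ∀ C, ∃ L, LipschitzOnWith L (gradient f) (Metric.closedBall 0 C)) {α : ℕ → ℝ}
    (hα : IsStepSchedule α) {θ ξ : ℕ → Ω → E}
    (hrec : ∀ n ω, θ (n + 1) ω = θ n ω - α n • (gradient f (θ n ω) + ξ n ω)) {a : ℕ → ℕ}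
    (ha : ∀ n, a n = sSup {k | n ≤ k ∧ elapsedTime α k - elapsedTime α n ≤ 1}) {r : ℝ} (hr : 1 < r)
    (hnoise : ∀ᵐ ω ∂P, (∃ C, ∀ n, ‖θ n ω‖ ≤ C) → IsBoundedUnder (· ≤ ·) atTop fun n =>
      ⨆ k ∈ Set.Ico n (a n), ‖∑ i ∈ Finset.Icc n k, (α i * elapsedTime α i ^ r) • ξ i ω‖)
    (hloj : ∀ C, ∀ b ∈ closure (f '' Metric.closedBall 0 C),
      LojasiewiczOn f (Metric.closedBall 0 C) b) :
    ∀ᵐ ω ∂P, (∃ C, ∀ n, ‖θ n ω‖ ≤ C) → ∃ θhat, Tendsto (fun n => θ n ω) atTop (𝓝 θhat) ∧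
      ((fun n => ‖gradient f (θ n ω)‖ ^ 2) =o[atTop] fun n => (elapsedTime α n)⁻¹) ∧
      (fun n => |f (θ n ω) - f θhat|) =o[atTop] fun n => (elapsedTime α n)⁻¹ := by
  filter_upwards [hnoise] with ω hω ⟨C, hC⟩
  obtain ⟨L, hL⟩ := hlip C
  have hpath : IsNoisyGradientDescent f (Metric.closedBall 0 C) L α (fun n => θ n ω)
      (fun n => ξ n ω) :=
    { differentiable := hfd
      convex := convex_closedBall 0 C
      lipschitz := hL
      mem := fun n => mem_closedBall_zero_iff.2 (hC n)
      step := fun n => hrec n ω }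
  exact hpath.exists_tendsto_and_isLittleO_inv hα hr
    (hα.hasNoiseRate_of_isBoundedUnder (zero_le_one.trans hr.le) ha (hω ⟨C, hC⟩))
    (bddBelow_image_of_lipschitzOnWith_gradient hfd hpath.convex hL Metric.isBounded_closedBall)
    (hloj C)

end GradientDescent

/-- Corollary 1.1 (iii) of the paper: under Assumptions 1.1,
1.2 and 1.3, almost surely on `Λ = {sup_n ‖θ_n‖ < ∞}` (with `θ̂ = lim θ_n`):
`‖∇f(θ_n)‖² = o(γ_n^{−p})` and `|f(θ_n) − f(θ̂)| = o(γ_n^{−p})`, where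
`p = min{1, r}`. -/
theorem stochastic_gradient_rate_min_one_r
    {d : ℕ} (hd : 1 ≤ d)
    {Ω : Type} [MeasurableSpace Ω] (P : Measure Ω) [IsProbabilityMeasure P]
    (f : EuclideanSpace ℝ (Fin d) → ℝ)
    (hfd : Differentiable ℝ f)
    (hlip : LocallyLipschitz (fun x => gradient f x))
    (α : ℕ → ℝ) (hαpos : ∀ n, 0 < α n)
    (θ ξ : ℕ → Ω → EuclideanSpace ℝ (Fin d))
    (hrec : ∀ n ω, θ (n + 1) ω = θ n ω - α n • (gradient f (θ n ω) + ξ n ω))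
    -- Assumption 1.1
    (hα0 : Tendsto α atTop (nhds 0))
    (γ : ℕ → ℝ) (hγ : ∀ n, γ n = ∑ i ∈ Finset.range n, α i)
    (hαdiv : Tendsto γ atTop atTop)
    -- the interpolation index `a(n,t)`
    (a : ℕ → ℝ → ℕ)
    (ha : ∀ n t, 0 < t → a n t = sSup {k | n ≤ k ∧ γ k - γ n ≤ t})
    -- the event Λ
    (Λ : Set Ω) (hΛ : Λ = {ω | ∃ C, ∀ n, ‖θ n ω‖ ≤ C})
    -- Assumption 1.2
    (r : ℝ) (hr : 1 < r)
    (noise : ℕ → Ω → ℝ)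
    (hnoise : ∀ n ω, noise n ω =
      ⨆ k ∈ Set.Ico n (a n 1), ‖∑ i ∈ Finset.Icc n k, (α i * γ i ^ r) • ξ i ω‖)
    (hA12 : ∀ᵐ ω ∂P, ω ∈ Λ → IsBoundedUnder (· ≤ ·) atTop (fun n => noise n ω))
    -- Assumption 1.3 (Łojasiewicz-type gradient inequality)
    (hLoj : ∀ Q : Set (EuclideanSpace ℝ (Fin d)), IsCompact Q → ∀ b ∈ f '' Q,
      ∃ δ μ M : ℝ, δ ∈ Set.Ioc (0 : ℝ) 1 ∧ μ ∈ Set.Ioc (1 : ℝ) 2 ∧ 1 ≤ M ∧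
        ∀ x ∈ Q, |f x - b| ≤ δ → |f x - b| ≤ M * ‖gradient f x‖ ^ μ) :
    ∀ᵐ ω ∂P, ω ∈ Λ →
      ∃ θhat, Tendsto (fun n => θ n ω) atTop (nhds θhat) ∧
        ((fun n => ‖gradient f (θ n ω)‖ ^ 2) =o[atTop] fun n => γ n ^ (-(min 1 r))) ∧
        ((fun n => |f (θ n ω) - f θhat|) =o[atTop] fun n => γ n ^ (-(min 1 r))) := by
  obtain rfl : γ = elapsedTime α := funext hγ
  obtain rfl := hΛ
  simp only [hnoise] at hA12
  simp only [min_eq_left hr.le, Real.rpow_neg_one]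
  have hball (C : ℝ) : IsCompact (Metric.closedBall (0 : EuclideanSpace ℝ (Fin d)) C) :=
    isCompact_closedBall 0 C
  refine stochastic_gradient_rate_min_one_r_general P hfd
    (fun C => hlip.locallyLipschitzOn.exists_lipschitzOnWith_of_compact (hball C))
    ⟨fun n => (hαpos n).le, hα0, hαdiv⟩ hrec (fun n => ha n 1 one_pos) hr hA12 fun C b hb => ?_
  rw [((hball C).image hfd.continuous).isClosed.closure_eq] at hb
  obtain ⟨δ, μ, M, hδ, hμ, hM, hineq⟩ := hLoj _ (hball C) b hb
  exact ⟨δ, hδ.1, μ, hμ.1, M, zero_le_one.trans hM, hineq⟩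
end

section
/- Under Assumptions 1.1, 1.2 and 1.3, lim_{n→∞} ∇f(θ_n) = 0 almost surely on Λ = {sup_{n≥0} ‖θ_n‖ < ∞}. -/
open MeasureTheory Filter

open scoped Topology Gradient

/-!
Let `X n = ∑ i < n, α i • ξ i`. Summation by parts against the weights `γ i ^ (-r)` bounds the
oscillation of `X` on every time window of length one starting at `γ n` by a multiple of
`γ n ^ (-r)`. Windows advance time by at least `1 / 2`, and `r > 1`, so these oscillations are
summable and `X` converges, to `X∞` say. The shifted iterate `η n = θ n + (X n - X∞)` then performs
gradient descent with a vanishing error, and `θ n - η n → 0`.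

Along such a descent `f (η n)` converges: once it is below a regular value `c` it cannot rise
appreciably above `c`, because near the level `c` the gradient dominates the error, and regular
values are dense. If `‖∇f (η n)‖` were bounded away from zero infinitely often, it would stay so on
time windows of a fixed length, and `f (η n)` would drop by a fixed amount each time.
-/

section Clock

variable {γ : ℕ → ℝ}

lemma exists_le_lt_succ_of_tendsto_atTop (hγ : Tendsto γ atTop atTop) {n : ℕ} {s : ℝ}
    (hs : γ n ≤ s) : ∃ k ≥ n, γ k ≤ s ∧ s < γ (k + 1) := by
  by_contra! hstay
  have hle : ∀ k ≥ n, γ k ≤ s := fun k hk => Nat.le_induction hs hstay k hk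
  obtain ⟨k, hk, hnk⟩ := ((hγ.eventually_gt_atTop s).and (eventually_ge_atTop n)).exists
  exact (hle k hnk).not_gt hk

lemma eventually_exists_half_le_sub_le (hγ : Tendsto γ atTop atTop)
    (hstep : Tendsto (fun n => γ (n + 1) - γ n) atTop (𝓝 0)) {t : ℝ} (ht : 0 < t) :
    ∀ᶠ n in atTop, ∃ k ≥ n, t / 2 ≤ γ k - γ n ∧ γ k - γ n ≤ t := by
  filter_upwards [eventually_forall_ge_atTop.2 (hstep.eventually_le_const (half_pos ht))]
    with n hsmall
  obtain ⟨k, hnk, hle, hlt⟩ :=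
    exists_le_lt_succ_of_tendsto_atTop hγ (n := n) (s := γ n + t) (by linarith)
  have := hsmall k hnk
  exact ⟨k, hnk, by linarith, by linarith⟩

lemma bddAbove_setOf_sub_le_of_tendsto_atTop (hγ : Tendsto γ atTop atTop) (n : ℕ) (t : ℝ) :
    BddAbove {k | n ≤ k ∧ γ k - γ n ≤ t} := by
  obtain ⟨N, hN⟩ := eventually_atTop.1 (hγ.eventually_gt_atTop (γ n + t))
  refine ⟨N, fun k hk => not_lt.1 fun hNk => ?_⟩
  linarith [hN k hNk.le, hk.2]

end Clock

section NoiseSeries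

lemma mul_rpow_neg_add_rpow_one_sub_le {r x h : ℝ} (hr : 1 ≤ r) (hx : 0 < x) (hh : 0 ≤ h) :
    (r - 1) * h * (x + h) ^ (-r) + (x + h) ^ (1 - r) ≤ x ^ (1 - r) := by
  rcases hh.eq_or_lt with rfl | hh
  · simp
  obtain ⟨c, ⟨hxc, hch⟩, hslope⟩ := exists_hasDerivAt_eq_slope (fun y : ℝ => y ^ (1 - r))
    (fun y => (1 - r) * y ^ (1 - r - 1)) (lt_add_of_pos_right x hh)
    (fun y hy => (Real.continuousAt_rpow_const _ _
      (Or.inl (hx.trans_le hy.1).ne')).continuousWithinAt)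
    (fun y hy => Real.hasDerivAt_rpow_const (Or.inl (hx.trans hy.1).ne'))
  rw [add_sub_cancel_left, eq_div_iff hh.ne', show 1 - r - 1 = -r by ring] at hslope
  have hcr : (x + h) ^ (-r) ≤ c ^ (-r) :=
    Real.rpow_le_rpow_of_nonpos (hx.trans hxc) hch.le (by linarith)
  have : (r - 1) * h * (x + h) ^ (-r) ≤ (r - 1) * h * c ^ (-r) :=
    mul_le_mul_of_nonneg_left hcr (mul_nonneg (by linarith) hh.le)
  linarith

lemma exists_pos_mul_rpow_neg_add_rpow_one_sub_le {r : ℝ} (hr : 1 < r) :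
    ∃ c > 0, ∀ x : ℝ, 1 ≤ x → c * x ^ (-r) + (x + 1 / 2) ^ (1 - r) ≤ x ^ (1 - r) := by
  have : 0 < r - 1 := by linarith
  refine ⟨(r - 1) * (1 / 2) * 2 ^ (-r), by positivity, fun x hx => ?_⟩
  have hdouble : (2 : ℝ) ^ (-r) * x ^ (-r) ≤ (x + 1 / 2) ^ (-r) := by
    rw [← Real.mul_rpow zero_le_two (by linarith)]
    exact Real.rpow_le_rpow_of_nonpos (by linarith) (by linarith) (by linarith)
  have := mul_le_mul_of_nonneg_left hdouble (show 0 ≤ (r - 1) * (1 / 2) by positivity)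
  linarith [mul_rpow_neg_add_rpow_one_sub_le hr.le (show 0 < x by linarith) one_half_pos.le]

variable {γ : ℕ → ℝ}

/- `Φ` bounds the tail sums of `h`: crossing one window costs `h` and advances time by at least
`1 / 2`. -/
lemma eventually_dist_le_of_window_dist_le {E : Type*} [PseudoMetricSpace E] {X : ℕ → E}
    {Φ h : ℝ → ℝ} {x₀ : ℝ} (hmono : Monotone γ) (hγ : Tendsto γ atTop atTop)
    (hstep : Tendsto (fun n => γ (n + 1) - γ n) atTop (𝓝 0))
    (hΦanti : AntitoneOn Φ (Set.Ici x₀)) (hΦnonneg : ∀ x ≥ x₀, 0 ≤ Φ x)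
    (hΦ : ∀ x ≥ x₀, h x + Φ (x + 1 / 2) ≤ Φ x)
    (hX : ∀ᶠ n in atTop, ∀ k ≥ n, γ k - γ n ≤ 1 → dist (X n) (X k) ≤ h (γ n)) :
    ∀ᶠ n in atTop, ∀ k ≥ n, dist (X n) (X k) ≤ Φ (γ n) := by
  obtain ⟨N, hN⟩ := eventually_atTop.1 ((eventually_exists_half_le_sub_le hγ hstep one_pos).and
    (hX.and (hγ.eventually_ge_atTop x₀)))
  refine eventually_atTop.2 ⟨N, fun n hn k => ?_⟩
  induction hm : k - n using Nat.strong_induction_on generalizing n with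
  | h m ih =>
    intro hnk
    obtain ⟨⟨n', hnn', hlo, hhi⟩, hXn, hx⟩ := hN n hn
    rcases le_or_gt (γ k - γ n) 1 with hle | hgt
    · linarith [hXn k hnk hle, hΦ _ hx, hΦnonneg (γ n + 1 / 2) (by linarith)]
    have hne : n' ≠ n := by
      rintro rfl
      norm_num at hlo
    have hn'k : n' < k := not_le.1 fun hkn' => by linarith [hmono hkn']
    calc dist (X n) (X k) ≤ dist (X n) (X n') + dist (X n') (X k) := dist_triangle _ _ _
      _ ≤ h (γ n) + Φ (γ n') :=
        add_le_add (hXn n' hnn' hhi) (ih (k - n') (by omega) n' (hn.trans hnn') rfl hn'k.le)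
      _ ≤ h (γ n) + Φ (γ n + 1 / 2) := by
        gcongr
        exact hΦanti (Set.mem_Ici.2 (by linarith)) (Set.mem_Ici.2 (by linarith)) (by linarith)
      _ ≤ Φ (γ n) := hΦ _ hx

lemma cauchySeq_of_window_dist_le_rpow {E : Type*} [PseudoMetricSpace E] {X : ℕ → E} {r K : ℝ}
    (hmono : Monotone γ) (hγ : Tendsto γ atTop atTop)
    (hstep : Tendsto (fun n => γ (n + 1) - γ n) atTop (𝓝 0)) (hr : 1 < r) (hK : 0 ≤ K)
    (hX : ∀ᶠ n in atTop, ∀ k ≥ n, γ k - γ n ≤ 1 → dist (X n) (X k) ≤ K * γ n ^ (-r)) :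
    CauchySeq X := by
  obtain ⟨c, hc, hpot⟩ := exists_pos_mul_rpow_neg_add_rpow_one_sub_le hr
  have hbound : ∀ᶠ n in atTop, ∀ k ≥ n, dist (X n) (X k) ≤ K / c * γ n ^ (1 - r) := by
    refine eventually_dist_le_of_window_dist_le (x₀ := 1) (Φ := fun x => K / c * x ^ (1 - r))
      (h := fun x => K * x ^ (-r)) hmono hγ hstep ?_ ?_ ?_ hX
    · exact fun x hx y _ hxy => mul_le_mul_of_nonneg_left
        (Real.rpow_le_rpow_of_nonpos (one_pos.trans_le hx) hxy (by linarith)) (by positivity)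
    · intro x hx
      have : 0 ≤ x := by linarith
      positivity
    · intro x hx
      calc K * x ^ (-r) + K / c * (x + 1 / 2) ^ (1 - r)
          = K / c * (c * x ^ (-r) + (x + 1 / 2) ^ (1 - r)) := by field_simp
        _ ≤ K / c * x ^ (1 - r) := mul_le_mul_of_nonneg_left (hpot x hx) (by positivity)
  have hlim : Tendsto (fun n => K / c * γ n ^ (1 - r)) atTop (𝓝 0) := by
    simpa [Function.comp_def] using
      ((tendsto_rpow_neg_atTop (sub_pos.2 hr)).comp hγ).const_mul (K / c)
  refine Metric.cauchySeq_iff'.2 fun ε hε => ?_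
  obtain ⟨n, hdist, hn⟩ := (hbound.and (hlim.eventually_lt_const hε)).exists
  exact ⟨n, fun k hk => (dist_comm (X k) (X n)).trans_lt ((hdist k hk).trans_lt hn)⟩

lemma norm_sum_Ico_le_iSup {E : Type*} [SeminormedAddCommGroup E] (v : ℕ → E)
    {n k m : ℕ} (hk : k ≤ m) :
    ‖∑ i ∈ Finset.Ico n k, v i‖ ≤ ⨆ j ∈ Set.Ico n m, ‖∑ i ∈ Finset.Icc n j, v i‖ := by
  rcases le_or_gt k n with hkn | hnk
  · rw [Finset.Ico_eq_empty_of_le hkn, Finset.sum_empty, norm_zero]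
    exact Real.iSup_nonneg fun j => Real.iSup_nonneg fun _ => norm_nonneg _
  obtain ⟨j, rfl⟩ : ∃ j, k = j + 1 := ⟨k - 1, by omega⟩
  have hbdd : BddAbove (⋃ j, Set.range fun _ : j ∈ Set.Ico n m => ‖∑ i ∈ Finset.Icc n j, v i‖) :=
    (((Set.finite_Ico n m).image fun j => ‖∑ i ∈ Finset.Icc n j, v i‖).subset <| by
      rintro _ ⟨_, ⟨j, rfl⟩, hj, rfl⟩
      exact ⟨j, hj, rfl⟩).bddAbove
  exact le_ciSup₂ hbdd j ⟨by omega, by omega⟩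

variable {E : Type*} [SeminormedAddCommGroup E] [NormedSpace ℝ E]

lemma norm_sum_range_smul_le_of_antitone {w : ℕ → ℝ} (hw : Antitone w) (hw0 : ∀ i, 0 ≤ w i)
    {y : ℕ → E} {K : ℝ} {k : ℕ} (hy : ∀ j ≤ k, ‖∑ i ∈ Finset.range j, y i‖ ≤ K) :
    ‖∑ i ∈ Finset.range k, w i • y i‖ ≤ K * w 0 := by
  have hparts : ∀ j ≤ k, ‖∑ i ∈ Finset.range j, w i • y i - w j • ∑ i ∈ Finset.range j, y i‖
      ≤ K * (w 0 - w j) := by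
    intro j
    induction j with
    | zero => simp
    | succ j ih =>
      intro hj
      have hdrop : 0 ≤ w j - w (j + 1) := sub_nonneg.2 (hw j.le_succ)
      have hsplit : ∑ i ∈ Finset.range (j + 1), w i • y i
            - w (j + 1) • ∑ i ∈ Finset.range (j + 1), y i
          = (∑ i ∈ Finset.range j, w i • y i - w j • ∑ i ∈ Finset.range j, y i)
            + (w j - w (j + 1)) • ∑ i ∈ Finset.range (j + 1), y i := by
        simp only [Finset.sum_range_succ]
        module
      calc _ ≤ K * (w 0 - w j) + (w j - w (j + 1)) * K := by
            rw [hsplit]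
            refine norm_add_le_of_le (ih (by omega)) ?_
            rw [norm_smul, Real.norm_of_nonneg hdrop]
            exact mul_le_mul_of_nonneg_left (hy _ hj) hdrop
        _ = K * (w 0 - w (j + 1)) := by ring
  calc ‖∑ i ∈ Finset.range k, w i • y i‖
      = ‖(∑ i ∈ Finset.range k, w i • y i - w k • ∑ i ∈ Finset.range k, y i)
          + w k • ∑ i ∈ Finset.range k, y i‖ := by rw [sub_add_cancel]
    _ ≤ K * (w 0 - w k) + w k * K := by
        refine norm_add_le_of_le (hparts k le_rfl) ?_
        rw [norm_smul, Real.norm_of_nonneg (hw0 k)]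
        exact mul_le_mul_of_nonneg_left (hy k le_rfl) (hw0 k)
    _ = K * w 0 := by ring

lemma norm_sum_Ico_le_of_norm_sum_rpow_smul_le (hmono : Monotone γ) {r K : ℝ} (hr : 0 ≤ r)
    {y : ℕ → E} {n k : ℕ} (hnk : n ≤ k) (hγn : 0 < γ n)
    (hy : ∀ j ≥ n, j ≤ k → ‖∑ i ∈ Finset.Ico n j, γ i ^ r • y i‖ ≤ K) :
    ‖∑ i ∈ Finset.Ico n k, y i‖ ≤ K * γ n ^ (-r) := by
  have hpos : ∀ i, 0 < γ (n + i) := fun i => hγn.trans_le (hmono (Nat.le_add_right n i))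
  have hcancel : ∀ i, γ (n + i) ^ (-r) • γ (n + i) ^ r • y (n + i) = y (n + i) := fun i => by
    rw [smul_smul, ← Real.rpow_add (hpos i), neg_add_cancel, Real.rpow_zero, one_smul]
  have habel := norm_sum_range_smul_le_of_antitone (w := fun i => γ (n + i) ^ (-r))
    (y := fun i => γ (n + i) ^ r • y (n + i)) (k := k - n) (K := K)
    (fun i j hij => Real.rpow_le_rpow_of_nonpos (hpos i) (hmono (by omega)) (neg_nonpos.2 hr))
    (fun i => Real.rpow_nonneg (hpos i).le _) fun j hj => by
      have hsum := hy (n + j) (Nat.le_add_right n j) (by omega)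
      rwa [Finset.sum_Ico_eq_sum_range, Nat.add_sub_cancel_left] at hsum
  simpa only [hcancel, ← Finset.sum_Ico_eq_sum_range y n k, add_zero] using habel

lemma cauchySeq_sum_of_window_norm_sum_rpow_smul_le (hmono : Monotone γ)
    (hγ : Tendsto γ atTop atTop) (hstep : Tendsto (fun n => γ (n + 1) - γ n) atTop (𝓝 0))
    {r K : ℝ} (hr : 1 < r) {y : ℕ → E}
    (hy : ∀ᶠ n in atTop, ∀ k ≥ n, γ k - γ n ≤ 1 →
      ‖∑ i ∈ Finset.Ico n k, γ i ^ r • y i‖ ≤ K) :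
    CauchySeq fun n => ∑ i ∈ Finset.range n, y i := by
  have hK : 0 ≤ K := by
    obtain ⟨n, hn⟩ := hy.exists
    exact (norm_nonneg _).trans (hn n le_rfl (by simp))
  refine cauchySeq_of_window_dist_le_rpow hmono hγ hstep hr hK ?_
  filter_upwards [hy, hγ.eventually_gt_atTop 0] with n hyn hγn k hnk hk
  rw [dist_comm, dist_eq_norm, ← Finset.sum_Ico_eq_sub _ hnk]
  exact norm_sum_Ico_le_of_norm_sum_rpow_smul_le hmono (by linarith) hnk hγn
    fun j hnj hjk => hyn j hnj (by linarith [hmono hjk])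

end NoiseSeries

section PerturbedDescent

lemma eventually_le_of_frequently_lt_of_descent {V D α : ℕ → ℝ} {c ρ b : ℝ} (hα0 : ∀ n, 0 ≤ α n)
    (hα : Tendsto α atTop (𝓝 0)) (hD : ∀ n, 0 ≤ D n)
    (hdesc : ∀ ε > 0, ∀ᶠ n in atTop, V (n + 1) ≤ V n - α n * (D n - ε))
    (hρ : 0 < ρ) (hreg : ∀ n, |V n - c| ≤ ρ → ρ ≤ D n) (hb : c < b)
    (hfreq : ∃ᶠ n in atTop, V n < c) : ∀ᶠ n in atTop, V n ≤ b := by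
  have hρb : 0 < min ρ (b - c) := lt_min hρ (sub_pos.2 hb)
  have hsmall : ∀ᶠ n in atTop, α n * ρ ≤ min ρ (b - c) := by
    have hlim : Tendsto (fun n => α n * ρ) atTop (𝓝 0) := by simpa using hα.mul_const ρ
    exact hlim.eventually_le_const hρb
  obtain ⟨N, hN⟩ := eventually_atTop.1 ((hdesc ρ hρ).and hsmall)
  have hstay : ∀ n ≥ N, V n ≤ c + min ρ (b - c) → V (n + 1) ≤ c + min ρ (b - c) := by
    intro n hn hle
    obtain ⟨hdn, hαn⟩ := hN n hn
    rcases le_or_gt (V n) c with hVc | hVc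
    · linarith [mul_nonneg (hα0 n) (hD n), mul_sub (α n) (D n) ρ]
    · have hDn : ρ ≤ D n := hreg n <| by
        rw [abs_of_pos (sub_pos.2 hVc)]
        linarith [min_le_left ρ (b - c)]
      linarith [mul_nonneg (hα0 n) (sub_nonneg.2 hDn)]
  obtain ⟨n, hVn, hn⟩ := (hfreq.and_eventually (eventually_ge_atTop N)).exists
  refine eventually_atTop.2 ⟨n, fun k hk => ?_⟩
  have hk : V k ≤ c + min ρ (b - c) :=
    Nat.le_induction (by linarith) (fun j hj => hstay j (hn.trans hj)) k hk
  linarith [min_le_right ρ (b - c)]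

lemma exists_tendsto_of_descent {V D α : ℕ → ℝ} {S : Set ℝ} (hα0 : ∀ n, 0 ≤ α n)
    (hα : Tendsto α atTop (𝓝 0)) (hD : ∀ n, 0 ≤ D n)
    (hdesc : ∀ ε > 0, ∀ᶠ n in atTop, V (n + 1) ≤ V n - α n * (D n - ε))
    (hS : Dense S) (hreg : ∀ c ∈ S, ∃ ρ > 0, ∀ n, |V n - c| ≤ ρ → ρ ≤ D n)
    (hVa : BddAbove (Set.range V)) (hVb : BddBelow (Set.range V)) :
    ∃ c, Tendsto V atTop (𝓝 c) := by
  refine tendsto_of_no_upcrossings hS ?_ hVa.isBoundedUnder_of_range hVb.isBoundedUnder_of_range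
  rintro c hc b - hcb ⟨hlt, hgt⟩
  obtain ⟨ρ, hρ, hreg⟩ := hreg c hc
  exact hgt ((eventually_le_of_frequently_lt_of_descent hα0 hα hD hdesc hρ hreg hcb hlt).mono
    fun n hn => hn.not_gt)

lemma exists_pos_forall_le_of_ne_zero_on_level {X : Type*} [TopologicalSpace X] {K : Set X}
    (hK : IsCompact K) {f g : X → ℝ} (hf : ContinuousOn f K) (hg : ContinuousOn g K)
    (hg0 : ∀ x ∈ K, 0 ≤ g x) {c : ℝ} (hc : ∀ x ∈ K, f x = c → g x ≠ 0) :
    ∃ ρ > 0, ∀ x ∈ K, |f x - c| ≤ ρ → ρ ≤ g x := by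
  have hpos : ∀ x ∈ K, 0 < g x + |f x - c| := fun x hx => by
    rcases eq_or_ne (f x) c with hfx | hfx
    · exact add_pos_of_pos_of_nonneg ((hg0 x hx).lt_of_ne' (hc x hx hfx)) (abs_nonneg _)
    · exact add_pos_of_nonneg_of_pos (hg0 x hx) (abs_pos.2 (sub_ne_zero.2 hfx))
  obtain ⟨κ, hκ, hle⟩ := hK.exists_forall_le' (hg.add (hf.sub continuousOn_const).abs) hpos
  refine ⟨κ / 2, half_pos hκ, fun x hx hfx => ?_⟩
  have hκx : κ ≤ g x + |f x - c| := hle x hx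
  linarith

lemma exists_tendsto_comp_of_descent {X : Type*} [TopologicalSpace X] {K : Set X}
    (hK : IsCompact K) {f g : X → ℝ} (hf : ContinuousOn f K) (hg : ContinuousOn g K)
    (hg0 : ∀ x ∈ K, 0 ≤ g x) (hreg : Dense (f '' {x ∈ K | g x = 0})ᶜ) {α : ℕ → ℝ}
    (hα0 : ∀ n, 0 ≤ α n) (hα : Tendsto α atTop (𝓝 0)) {x : ℕ → X} (hxK : ∀ n, x n ∈ K)
    (hdesc : ∀ ε > 0, ∀ᶠ n in atTop, f (x (n + 1)) ≤ f (x n) - α n * (g (x n) - ε)) :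
    ∃ c, Tendsto (fun n => f (x n)) atTop (𝓝 c) := by
  have hrange : Set.range (fun n => f (x n)) ⊆ f '' K := by
    rintro _ ⟨n, rfl⟩
    exact Set.mem_image_of_mem f (hxK n)
  refine exists_tendsto_of_descent hα0 hα (fun n => hg0 _ (hxK n)) hdesc hreg (fun c hc => ?_)
    ((hK.bddAbove_image hf).mono hrange) ((hK.bddBelow_image hf).mono hrange)
  obtain ⟨ρ, hρ, hle⟩ := exists_pos_forall_le_of_ne_zero_on_level hK hf hg hg0
    fun y hy hfy hgy => hc ⟨y, ⟨hy, hgy⟩, hfy⟩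
  exact ⟨ρ, hρ, fun n => hle _ (hxK n)⟩

variable {γ : ℕ → ℝ}

lemma le_sub_sub_mul_of_forall_succ_le {V : ℕ → ℝ} {c : ℝ} {n k : ℕ} (hnk : n ≤ k)
    (h : ∀ j ≥ n, j < k → V (j + 1) ≤ V j - (γ (j + 1) - γ j) * c) :
    V k ≤ V n - (γ k - γ n) * c := by
  induction k, hnk using Nat.le_induction with
  | base => simp
  | succ k hnk ih =>
    linarith [ih fun j hj hjk => h j hj (hjk.trans k.lt_succ_self), h k hnk k.lt_succ_self]

lemma tendsto_zero_of_descent_of_slowlyVarying {V D : ℕ → ℝ} (hmono : Monotone γ)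
    (hγ : Tendsto γ atTop atTop) (hstep : Tendsto (fun n => γ (n + 1) - γ n) atTop (𝓝 0))
    (hV : CauchySeq V) (hD : ∀ n, 0 ≤ D n)
    (hdesc : ∀ ε > 0, ∀ᶠ n in atTop, V (n + 1) ≤ V n - (γ (n + 1) - γ n) * (D n - ε))
    (hslow : ∀ ε > 0, ∃ τ > 0, ∀ n, ∀ k ≥ n, γ k - γ n ≤ τ → |D n - D k| ≤ ε) :
    Tendsto D atTop (𝓝 0) := by
  refine tendsto_order.2 ⟨fun b hb => .of_forall fun n => hb.trans_le (hD n), fun b hb => ?_⟩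
  obtain ⟨ε, hε, rfl⟩ : ∃ ε > 0, b = 3 * ε := ⟨b / 3, by linarith, by ring⟩
  obtain ⟨τ, hτ, hslow⟩ := hslow ε hε
  obtain ⟨N, hN⟩ := Metric.cauchySeq_iff.1 hV (τ / 2 * ε) (by positivity)
  filter_upwards [eventually_exists_half_le_sub_le hγ hstep hτ,
    eventually_forall_ge_atTop.2 (hdesc ε hε), eventually_ge_atTop N] with n hwin hdn hn
  by_contra! hlarge
  obtain ⟨k, hnk, hlo, hhi⟩ := hwin
  have hdrop : V k ≤ V n - (γ k - γ n) * ε := by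
    refine le_sub_sub_mul_of_forall_succ_le hnk fun j hnj hjk => ?_
    have hDj : ε ≤ D j - ε := by
      linarith [(abs_le.1 (hslow n j hnj (by linarith [hmono hjk.le]))).2]
    linarith [hdn j hnj, mul_le_mul_of_nonneg_left hDj (sub_nonneg.2 (hmono j.le_succ))]
  have hclose : |V k - V n| < τ / 2 * ε := hN k (hn.trans hnk) n hn
  linarith [(abs_lt.1 hclose).1, mul_le_mul_of_nonneg_right hlo hε.le]

lemma exists_forall_dist_comp_le_of_dist_succ_le {X Y : Type*} [PseudoMetricSpace X]
    [PseudoMetricSpace Y] {x : ℕ → X} {M : ℝ} (hmono : Monotone γ)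
    (hx : ∀ n, dist (x n) (x (n + 1)) ≤ M * (γ (n + 1) - γ n)) {s : Set X} (hxs : ∀ n, x n ∈ s)
    {g : X → Y} (hg : UniformContinuousOn g s) {ε : ℝ} (hε : 0 < ε) :
    ∃ τ > 0, ∀ n, ∀ k ≥ n, γ k - γ n ≤ τ → dist (g (x n)) (g (x k)) ≤ ε := by
  obtain ⟨δ, hδ, hgδ⟩ := Metric.uniformContinuousOn_iff_le.1 hg ε hε
  refine ⟨δ / (|M| + 1), by positivity, fun n k hnk hk => hgδ _ (hxs n) _ (hxs k) ?_⟩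
  calc dist (x n) (x k) ≤ ∑ i ∈ Finset.Ico n k, M * (γ (i + 1) - γ i) :=
        dist_le_Ico_sum_of_dist_le hnk fun _ _ => hx _
    _ = M * (γ k - γ n) := by rw [← Finset.mul_sum, Finset.sum_Ico_sub _ hnk]
    _ ≤ (|M| + 1) * (δ / (|M| + 1)) :=
        mul_le_mul (by linarith [le_abs_self M]) hk (sub_nonneg.2 (hmono hnk)) (by positivity)
    _ = δ := mul_div_cancel₀ _ (by positivity)

lemma tendsto_comp_sub_comp_of_uniformContinuousOn {ι E F : Type*}
    [SeminormedAddCommGroup E] [SeminormedAddCommGroup F] {l : Filter ι} {g : E → F} {s : Set E}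
    (hg : UniformContinuousOn g s) {x y : ι → E} (hx : ∀ n, x n ∈ s) (hy : ∀ n, y n ∈ s)
    (hxy : Tendsto (fun n => x n - y n) l (𝓝 0)) :
    Tendsto (fun n => g (x n) - g (y n)) l (𝓝 0) := by
  refine Metric.tendsto_nhds.2 fun ε hε => ?_
  obtain ⟨δ, hδ, hgδ⟩ := Metric.uniformContinuousOn_iff.1 hg ε hε
  filter_upwards [Metric.tendsto_nhds.1 hxy δ hδ] with n hn
  rw [dist_zero_right, ← dist_eq_norm] at hn ⊢
  exact hgδ _ (hx n) _ (hy n) hn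

end PerturbedDescent

section Gradient

variable {E : Type*} [NormedAddCommGroup E] [InnerProductSpace ℝ E]

lemma exists_forall_abs_sub_sub_inner_gradient_le [CompleteSpace E] {f : E → ℝ} {s : Set E}
    (hs : Convex ℝ s) (hf : ∀ x ∈ s, DifferentiableAt ℝ f x) (hg : UniformContinuousOn (∇ f) s)
    {ε : ℝ} (hε : 0 < ε) :
    ∃ δ > 0, ∀ x ∈ s, ∀ y ∈ s, ‖y - x‖ ≤ δ →
      |f y - f x - inner ℝ (∇ f x) (y - x)| ≤ ε * ‖y - x‖ := by
  obtain ⟨δ, hδ, hgδ⟩ := Metric.uniformContinuousOn_iff_le.1 hg ε hε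
  refine ⟨δ, hδ, fun x hx y hy hxy => ?_⟩
  have hseg : segment ℝ x y ⊆ s := hs.segment_subset hx hy
  have hosc : ∀ z ∈ segment ℝ x y, ‖InnerProductSpace.toDual ℝ E (∇ f z)
      - InnerProductSpace.toDual ℝ E (∇ f x)‖ ≤ ε := fun z hz => by
    rw [← map_sub, LinearIsometryEquiv.norm_map, ← dist_eq_norm]
    refine hgδ z (hseg hz) x hx ?_
    rw [dist_eq_norm]
    exact (norm_sub_le_of_mem_segment hz).trans hxy
  exact (convex_segment x y).norm_image_sub_le_of_norm_hasFDerivWithin_le'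
    (fun z hz => (hf z (hseg hz)).hasGradientAt.hasFDerivAt.hasFDerivWithinAt) hosc
    (left_mem_segment ℝ x y) (right_mem_segment ℝ x y)

lemma eventually_descent_of_tendsto_sub_gradient [CompleteSpace E] {f : E → ℝ} {s : Set E}
    (hs : Convex ℝ s) (hf : ∀ x ∈ s, DifferentiableAt ℝ f x) (hg : UniformContinuousOn (∇ f) s)
    {G M : ℝ} (hG : ∀ x ∈ s, ‖∇ f x‖ ≤ G) {α : ℕ → ℝ} (hα0 : ∀ n, 0 ≤ α n)
    (hα : Tendsto α atTop (𝓝 0)) {η v : ℕ → E} (hηs : ∀ n, η n ∈ s)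
    (hη : ∀ n, η (n + 1) = η n - α n • v n) (hM : ∀ n, ‖v n‖ ≤ M)
    (hv : Tendsto (fun n => v n - ∇ f (η n)) atTop (𝓝 0)) {ε : ℝ} (hε : 0 < ε) :
    ∀ᶠ n in atTop, f (η (n + 1)) ≤ f (η n) - α n * (‖∇ f (η n)‖ ^ 2 - ε) := by
  have hG0 : 0 ≤ G := (norm_nonneg _).trans (hG _ (hηs 0))
  have hM0 : 0 ≤ M := (norm_nonneg _).trans (hM 0)
  obtain ⟨κ, hκ, hκε⟩ : ∃ κ > 0, κ * (G + M) ≤ ε := by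
    refine ⟨ε / (G + M + 1), by positivity, ?_⟩
    rw [div_mul_eq_mul_div, div_le_iff₀ (by positivity)]
    linarith
  obtain ⟨δ, hδ, htaylor⟩ := exists_forall_abs_sub_sub_inner_gradient_le hs hf hg hκ
  have hαM : Tendsto (fun n => α n * M) atTop (𝓝 0) := by simpa using hα.mul_const M
  have hv0 : Tendsto (fun n => ‖v n - ∇ f (η n)‖) atTop (𝓝 0) := by simpa using hv.norm
  filter_upwards [hαM.eventually_le_const hδ, hv0.eventually_le_const hκ] with n hαn hvn
  have hincr : η (n + 1) - η n = -(α n • v n) := by rw [hη]; abel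
  have hlen : ‖η (n + 1) - η n‖ ≤ α n * M := by
    rw [hincr, norm_neg, norm_smul, Real.norm_of_nonneg (hα0 n)]
    exact mul_le_mul_of_nonneg_left (hM n) (hα0 n)
  have hinner : ‖∇ f (η n)‖ ^ 2 - G * κ ≤ inner ℝ (∇ f (η n)) (v n) := by
    have herr : |inner ℝ (∇ f (η n)) (v n - ∇ f (η n))| ≤ G * κ :=
      (abs_real_inner_le_norm _ _).trans (mul_le_mul (hG _ (hηs n)) hvn (norm_nonneg _) hG0)
    rw [inner_sub_right, real_inner_self_eq_norm_sq] at herr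
    linarith [(abs_le.1 herr).1]
  have hT := (abs_le.1 (htaylor _ (hηs n) _ (hηs (n + 1)) (hlen.trans hαn))).2
  calc f (η (n + 1)) ≤ f (η n) - α n * inner ℝ (∇ f (η n)) (v n) + κ * (α n * M) := by
        have := mul_le_mul_of_nonneg_left hlen hκ.le
        rw [hincr, inner_neg_right, inner_smul_right, ← hincr] at hT
        linarith
    _ ≤ f (η n) - α n * (‖∇ f (η n)‖ ^ 2 - G * κ) + κ * (α n * M) := by
        linarith [mul_le_mul_of_nonneg_left hinner (hα0 n)]
    _ = f (η n) - α n * (‖∇ f (η n)‖ ^ 2 - κ * (G + M)) := by ring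
    _ ≤ f (η n) - α n * (‖∇ f (η n)‖ ^ 2 - ε) := by
        linarith [mul_le_mul_of_nonneg_left hκε (hα0 n)]

/-- The values of `f` at its critical points, that is, at the zeros of its gradient. Only meaningful
for differentiable `f`, since `∇ f x = 0` where `f` is not differentiable. -/
def criticalValues [CompleteSpace E] (f : E → ℝ) : Set ℝ := f '' {x | ∇ f x = 0}

lemma tendsto_gradient_of_tendsto_sub_gradient [CompleteSpace E] {f : E → ℝ}
    (hf : Differentiable ℝ f) (hg : Continuous (∇ f)) (hcrit : Dense (criticalValues f)ᶜ)
    {s : Set E} (hs : IsCompact s) (hsc : Convex ℝ s) {α : ℕ → ℝ} (hα0 : ∀ n, 0 ≤ α n)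
    (hα : Tendsto α atTop (𝓝 0)) (hαdiv : Tendsto (fun n => ∑ i ∈ Finset.range n, α i) atTop atTop)
    {η v : ℕ → E} (hηs : ∀ n, η n ∈ s) (hη : ∀ n, η (n + 1) = η n - α n • v n)
    (hv : Tendsto (fun n => v n - ∇ f (η n)) atTop (𝓝 0)) :
    Tendsto (fun n => ∇ f (η n)) atTop (𝓝 0) := by
  set γ : ℕ → ℝ := fun n => ∑ i ∈ Finset.range n, α i with hγ
  have hγα : ∀ n, γ (n + 1) - γ n = α n := fun n => by simp [hγ, Finset.sum_range_succ]
  have hmono : Monotone γ := monotone_nat_of_le_succ fun n => sub_nonneg.1 <| hγα n ▸ hα0 n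
  obtain ⟨G, hG⟩ := hs.exists_bound_of_continuousOn hg.continuousOn
  obtain ⟨M, hM⟩ : ∃ M, ∀ n, ‖v n‖ ≤ M := by
    obtain ⟨C, hC⟩ := hv.norm.bddAbove_range
    exact ⟨C + G, fun n => by
      simpa using norm_add_le_of_le (hC ⟨n, rfl⟩) (hG _ (hηs n))⟩
  have hdesc : ∀ ε > 0, ∀ᶠ n in atTop,
      f (η (n + 1)) ≤ f (η n) - α n * (‖∇ f (η n)‖ ^ 2 - ε) := fun ε hε =>
    eventually_descent_of_tendsto_sub_gradient hsc (fun x _ => hf x)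
      (hs.uniformContinuousOn_of_continuous hg.continuousOn) hG hα0 hα hηs hη hM hv hε
  have hDc : ContinuousOn (fun x => ‖∇ f x‖ ^ 2) s := (hg.norm.pow 2).continuousOn
  have hsub : f '' {x ∈ s | ‖∇ f x‖ ^ 2 = 0} ⊆ criticalValues f :=
    Set.image_mono fun x hx => by simpa using hx.2
  obtain ⟨c, hc⟩ := exists_tendsto_comp_of_descent hs hf.continuous.continuousOn hDc
    (fun _ _ => sq_nonneg _) (hcrit.mono (Set.compl_subset_compl.2 hsub)) hα0 hα hηs hdesc
  have hslow : ∀ ε > 0, ∃ τ > 0, ∀ n, ∀ k ≥ n, γ k - γ n ≤ τ →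
      |‖∇ f (η n)‖ ^ 2 - ‖∇ f (η k)‖ ^ 2| ≤ ε := fun ε hε =>
    exists_forall_dist_comp_le_of_dist_succ_le (M := M) hmono (fun n => by
      rw [hη, dist_self_sub_right, norm_smul, Real.norm_of_nonneg (hα0 n), hγα, mul_comm]
      exact mul_le_mul_of_nonneg_right (hM n) (hα0 n)) hηs
      (hs.uniformContinuousOn_of_continuous hDc) hε
  have hsq : Tendsto (fun n => ‖∇ f (η n)‖ ^ 2) atTop (𝓝 0) :=
    tendsto_zero_of_descent_of_slowlyVarying hmono hαdiv (by simpa only [hγα] using hα)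
      hc.cauchySeq (fun n => sq_nonneg _) (by simpa only [hγα] using hdesc) hslow
  exact tendsto_zero_iff_norm_tendsto_zero.2 (by simpa using hsq.sqrt)

theorem tendsto_gradient_of_cauchySeq_noise [ProperSpace E] {f : E → ℝ} (hf : Differentiable ℝ f)
    (hg : Continuous (∇ f)) (hcrit : Dense (criticalValues f)ᶜ) {α : ℕ → ℝ} (hα0 : ∀ n, 0 ≤ α n)
    (hα : Tendsto α atTop (𝓝 0)) (hαdiv : Tendsto (fun n => ∑ i ∈ Finset.range n, α i) atTop atTop)
    {θ ξ : ℕ → E} {C : ℝ} (hC : ∀ n, ‖θ n‖ ≤ C)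
    (hθ : ∀ n, θ (n + 1) = θ n - α n • (∇ f (θ n) + ξ n))
    (hnoise : CauchySeq fun n => ∑ i ∈ Finset.range n, α i • ξ i) :
    Tendsto (fun n => ∇ f (θ n)) atTop (𝓝 0) := by
  obtain ⟨X, hX⟩ := cauchySeq_tendsto_of_complete hnoise
  set e : ℕ → E := fun n => ∑ i ∈ Finset.range n, α i • ξ i - X with he
  have he0 : Tendsto e atTop (𝓝 0) := by simpa using hX.sub_const X
  obtain ⟨D, hD⟩ := he0.norm.bddAbove_range
  have hDe : ∀ n, ‖e n‖ ≤ D := fun n => hD ⟨n, rfl⟩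
  set s := Metric.closedBall (0 : E) (C + D)
  have hs : IsCompact s := isCompact_closedBall _ _
  have hθs : ∀ n, θ n ∈ s := fun n =>
    mem_closedBall_zero_iff.2 (by linarith [hC n, (norm_nonneg _).trans (hDe n)])
  have hηs : ∀ n, θ n + e n ∈ s := fun n =>
    mem_closedBall_zero_iff.2 (norm_add_le_of_le (hC n) (hDe n))
  have hη : ∀ n, θ (n + 1) + e (n + 1) = θ n + e n - α n • ∇ f (θ n) := fun n => by
    simp only [he, hθ, Finset.sum_range_succ]
    module
  have hv : Tendsto (fun n => ∇ f (θ n) - ∇ f (θ n + e n)) atTop (𝓝 0) :=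
    tendsto_comp_sub_comp_of_uniformContinuousOn
      (hs.uniformContinuousOn_of_continuous hg.continuousOn) hθs hηs (by simpa using he0.neg)
  simpa using hv.add
    (tendsto_gradient_of_tendsto_sub_gradient hf hg hcrit hs (convex_closedBall _ _) hα0 hα hαdiv
      hηs hη hv)

lemma isDiscrete_image_of_lojasiewicz {X F : Type*} [SeminormedAddCommGroup F] {f : X → ℝ}
    {g : X → F} {s : Set X}
    (h : ∀ b ∈ f '' s, ∃ δ μ M : ℝ, 0 < δ ∧ μ ≠ 0 ∧
      ∀ x ∈ s, |f x - b| ≤ δ → |f x - b| ≤ M * ‖g x‖ ^ μ) :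
    IsDiscrete (f '' {x ∈ s | g x = 0}) := by
  refine .of_nhdsWithin ?_
  rintro _ ⟨x, ⟨hxs, -⟩, rfl⟩
  obtain ⟨δ, μ, M, hδ, hμ, hle⟩ := h (f x) ⟨x, hxs, rfl⟩
  rw [le_pure_iff]
  filter_upwards [self_mem_nhdsWithin, mem_nhdsWithin_of_mem_nhds (Metric.closedBall_mem_nhds _ hδ)]
  rintro _ ⟨y, ⟨hys, hgy⟩, rfl⟩ hyx
  have hzero : |f y - f x| ≤ 0 := by simpa [hgy, Real.zero_rpow hμ] using hle y hys hyx
  exact sub_eq_zero.1 (abs_nonpos_iff.1 hzero)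

lemma dense_compl_criticalValues_of_lojasiewicz [ProperSpace E] {f : E → ℝ}
    (h : ∀ Q : Set E, IsCompact Q → ∀ b ∈ f '' Q, ∃ δ μ M : ℝ, 0 < δ ∧ μ ≠ 0 ∧
      ∀ x ∈ Q, |f x - b| ≤ δ → |f x - b| ≤ M * ‖∇ f x‖ ^ μ) :
    Dense (criticalValues f)ᶜ := by
  have hcover : criticalValues f
      ⊆ ⋃ n : ℕ, f '' {x ∈ Metric.closedBall (0 : E) n | ∇ f x = 0} := by
    rintro _ ⟨x, hx, rfl⟩
    obtain ⟨n, hn⟩ := exists_nat_ge ‖x‖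
    exact Set.mem_iUnion.2 ⟨n, x, ⟨mem_closedBall_zero_iff.2 hn, hx⟩, rfl⟩
  refine (Set.Countable.mono hcover (Set.countable_iUnion fun n => ?_)).dense_compl ℝ
  exact (HereditarilyLindelofSpace.isLindelof _).countable_of_isDiscrete
    (isDiscrete_image_of_lojasiewicz (h _ (isCompact_closedBall _ _)))

end Gradient

theorem stochastic_gradient_gradient_tendsto_zero_general
    {E : Type*} [NormedAddCommGroup E] [InnerProductSpace ℝ E] [ProperSpace E]
    {Ω : Type*} [MeasurableSpace Ω] (P : Measure Ω)
    (f : E → ℝ) (hf : Differentiable ℝ f) (hg : Continuous (∇ f))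
    (hcrit : Dense (criticalValues f)ᶜ)
    (α : ℕ → ℝ) (hα0 : ∀ n, 0 ≤ α n) (hα : Tendsto α atTop (𝓝 0))
    (θ ξ : ℕ → Ω → E)
    (hθ : ∀ n ω, θ (n + 1) ω = θ n ω - α n • (∇ f (θ n ω) + ξ n ω))
    (γ : ℕ → ℝ) (hγ : ∀ n, γ n = ∑ i ∈ Finset.range n, α i) (hγdiv : Tendsto γ atTop atTop)
    (a : ℕ → ℕ) (ha : ∀ n, a n = sSup {k | n ≤ k ∧ γ k - γ n ≤ 1})
    (r : ℝ) (hr : 1 < r)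
    (hnoise : ∀ᵐ ω ∂P, (∃ C, ∀ n, ‖θ n ω‖ ≤ C) → IsBoundedUnder (· ≤ ·) atTop fun n =>
      ⨆ k ∈ Set.Ico n (a n), ‖∑ i ∈ Finset.Icc n k, (α i * γ i ^ r) • ξ i ω‖) :
    ∀ᵐ ω ∂P, (∃ C, ∀ n, ‖θ n ω‖ ≤ C) → Tendsto (fun n => ∇ f (θ n ω)) atTop (𝓝 0) := by
  have hγα : ∀ n, γ (n + 1) - γ n = α n := fun n => by simp [hγ, Finset.sum_range_succ]
  have hmono : Monotone γ := monotone_nat_of_le_succ fun n => sub_nonneg.1 <| hγα n ▸ hα0 n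
  filter_upwards [hnoise] with ω hω hbdd
  obtain ⟨K, hK⟩ := hω hbdd
  obtain ⟨C, hC⟩ := hbdd
  refine tendsto_gradient_of_cauchySeq_noise hf hg hcrit hα0 hα (funext hγ ▸ hγdiv) hC
    (fun n => hθ n ω) ?_
  refine cauchySeq_sum_of_window_norm_sum_rpow_smul_le (K := K) hmono hγdiv
    (by simpa only [hγα] using hα) hr ?_
  filter_upwards [eventually_map.1 hK] with n hKn k hnk hk
  have hka : k ≤ a n :=
    ha n ▸ le_csSup (bddAbove_setOf_sub_le_of_tendsto_atTop hγdiv n 1) ⟨hnk, hk⟩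
  simpa only [smul_smul, mul_comm] using (norm_sum_Ico_le_iSup _ hka).trans hKn

/-- Lemma 1.3 of the paper: under Assumptions 1.1, 1.2 and
1.3, `lim_n ∇f(θ_n) = 0` almost surely on `Λ = {sup_n ‖θ_n‖ < ∞}`. -/
theorem stochastic_gradient_gradient_tendsto_zero
    {d : ℕ} (hd : 1 ≤ d)
    {Ω : Type} [MeasurableSpace Ω] (P : Measure Ω) [IsProbabilityMeasure P]
    (f : EuclideanSpace ℝ (Fin d) → ℝ)
    (hfd : Differentiable ℝ f)
    (hlip : LocallyLipschitz (fun x => gradient f x))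
    (α : ℕ → ℝ) (hαpos : ∀ n, 0 < α n)
    (θ ξ : ℕ → Ω → EuclideanSpace ℝ (Fin d))
    (hrec : ∀ n ω, θ (n + 1) ω = θ n ω - α n • (gradient f (θ n ω) + ξ n ω))
    -- Assumption 1.1
    (hα0 : Tendsto α atTop (nhds 0))
    (γ : ℕ → ℝ) (hγ : ∀ n, γ n = ∑ i ∈ Finset.range n, α i)
    (hαdiv : Tendsto γ atTop atTop)
    -- the interpolation index `a(n,t)`
    (a : ℕ → ℝ → ℕ)
    (ha : ∀ n t, 0 < t → a n t = sSup {k | n ≤ k ∧ γ k - γ n ≤ t})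
    -- the event Λ
    (Λ : Set Ω) (hΛ : Λ = {ω | ∃ C, ∀ n, ‖θ n ω‖ ≤ C})
    -- Assumption 1.2
    (r : ℝ) (hr : 1 < r)
    (noise : ℕ → Ω → ℝ)
    (hnoise : ∀ n ω, noise n ω =
      ⨆ k ∈ Set.Ico n (a n 1), ‖∑ i ∈ Finset.Icc n k, (α i * γ i ^ r) • ξ i ω‖)
    (hA12 : ∀ᵐ ω ∂P, ω ∈ Λ → IsBoundedUnder (· ≤ ·) atTop (fun n => noise n ω))
    -- Assumption 1.3 (Łojasiewicz-type gradient inequality)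
    (hLoj : ∀ Q : Set (EuclideanSpace ℝ (Fin d)), IsCompact Q → ∀ b ∈ f '' Q,
      ∃ δ μ M : ℝ, δ ∈ Set.Ioc (0 : ℝ) 1 ∧ μ ∈ Set.Ioc (1 : ℝ) 2 ∧ 1 ≤ M ∧
        ∀ x ∈ Q, |f x - b| ≤ δ → |f x - b| ≤ M * ‖gradient f x‖ ^ μ) :
    ∀ᵐ ω ∂P, ω ∈ Λ →
      Tendsto (fun n => gradient f (θ n ω)) atTop (nhds 0) := by
  subst hΛ
  simp only [hnoise] at hA12
  exact stochastic_gradient_gradient_tendsto_zero_general P f hfd hlip.continuous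
    (dense_compl_criticalValues_of_lojasiewicz fun Q hQ b hb =>
      have ⟨δ, μ, M, hδ, hμ, _, h⟩ := hLoj Q hQ b hb
      ⟨δ, μ, M, hδ.1, (one_pos.trans hμ.1).ne', h⟩)
    α (fun n => (hαpos n).le) hα0 θ ξ hrec γ hγ hαdiv (a · 1) (ha · 1 one_pos) r hr hA12
end
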